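/- arXiv:1611.05314 — 2 statements merged into one kernel-verified Lean document; each statement's English description precedes it below -/
import Mathlib

section
/- Fix integers k ≥ 2 and ℓ ≥ 1, and real numbers x_1, …, x_ℓ with x_1 ≠ 0 and S := x_2 + ⋯ + x_ℓ + 1 ≠ 0 (for ℓ = 1, S = 1). For each n ≥ k let Π_{n−1}(k−1) ⊆ ℝ^n be the general permutahedron and ξ^ℓ_{Π_{n−1}(k−1)}(x_1,…,x_ℓ) its exponential ℓ-flag polynomial. Then the series ∑_{n≥k} ξ^ℓ_{Π_{n−1}(k−1)}(x_1,…,x_ℓ)·y^n/n! converges absolutely for every real y, and for every real y ≠ 0 it equals (1/S)·∑_{i=0}^{k−1} [(x_1 y)^i·(e^{x_1 y} − E_{k−i−1}(x_1 y)) / (i!·(e^{x_1 y} − 1)^{i+1})]·[e^{(S/x_1)(e^{x_1 y} − 1)} − E_i((S/x_1)(e^{x_1 y} − 1))], where E_m(t) = ∑_{j=0}^{m} t^j/j! is the degree-m Taylor polynomial of e^t. -/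
open Pointwise

noncomputable section

/-- The simplex Δ_F ⊆ ℝ^n for F ⊆ {0,…,n−1}. -/
def stdSimplexOn (n : ℕ) (F : Finset (Fin n)) : Set (Fin n → ℝ) :=
  {x | (∀ i, 0 ≤ x i) ∧ (∀ i, i ∉ F → x i = 0) ∧ ∑ i, x i = 1}

/-- The general permutahedron Π_{n−1}(k−1) ⊆ ℝ^n, Minkowski sum of all Δ_F with |F| = k. -/
def genPerm (n k : ℕ) : Set (Fin n → ℝ) :=
  ∑ F ∈ Finset.univ.powersetCard k, stdSimplexOn n F

/-- P_{n−1}(v): convex hull of the orbit of v under coordinate permutations. -/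
def permPoly {n : ℕ} (v : Fin n → ℝ) : Set (Fin n → ℝ) :=
  convexHull ℝ {w | ∃ σ : Equiv.Perm (Fin n), w = v ∘ σ}

/-- Dimension of a subset of ℝ^n : dimension of its affine span. -/
def setDim {n : ℕ} (S : Set (Fin n → ℝ)) : ℕ :=
  Module.finrank ℝ (affineSpan ℝ S).direction

/-- Nonempty exposed face of P : the maximizer set of some linear functional. -/
def IsExpFace {n : ℕ} (P A : Set (Fin n → ℝ)) : Prop :=
  A.Nonempty ∧ ∃ L : (Fin n → ℝ) →ₗ[ℝ] ℝ, A = {x ∈ P | ∀ y ∈ P, L y ≤ L x}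

/-- Stirling numbers of the second kind. -/
def stirling2 : ℕ → ℕ → ℕ
  | 0, 0 => 1
  | 0, _ + 1 => 0
  | _ + 1, 0 => 0
  | n + 1, k + 1 => (k + 1) * stirling2 n (k + 1) + stirling2 n k

/-- i-th backward difference of u at position k. -/
def bdiff {n : ℕ} (u : Fin n → ℝ) (i : ℕ) (k : Fin n) : ℝ :=
  ∑ j ∈ Finset.range (i + 1), (-1 : ℝ) ^ j * (i.choose j) *
    u ⟨(k : ℕ) - j, lt_of_le_of_lt (Nat.sub_le _ _) k.isLt⟩

/-- The number of chains A_1 ⊆ ⋯ ⊆ A_ℓ of nonempty exposed faces of P with dim A_i = s i. -/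
def flagCount {n : ℕ} (P : Set (Fin n → ℝ)) (l : ℕ) (s : Fin l → ℕ) : ℕ :=
  Nat.card {A : Fin l → Set (Fin n → ℝ) //
    (∀ i, IsExpFace P (A i) ∧ setDim (A i) = s i) ∧ ∀ i j, i ≤ j → A i ⊆ A j}

/-- The exponential (l+1)-flag polynomial of P ⊆ ℝ^n (a polytope of dimension n−1). -/
def xiFlag {n : ℕ} (P : Set (Fin n → ℝ)) (l : ℕ) (x : Fin (l + 1) → ℝ) : ℝ :=
  ∑ s : Fin (l + 1) → Fin n, if Monotone s then
    ((flagCount P (l + 1) (fun i => (s i : ℕ)) : ℝ) / (Nat.factorial (n - (s 0 : ℕ)))) *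
      ∏ i : Fin (l + 1), x i ^ (if (i : ℕ) = 0 then (s i : ℕ) else
        (s i : ℕ) - (s ⟨(i : ℕ) - 1, lt_of_le_of_lt (Nat.sub_le _ _) i.isLt⟩ : ℕ))
  else 0

/-- The standard permutahedron Π_{n−1} ⊆ ℝ^n. -/
def stdPermutahedron (n : ℕ) : Set (Fin n → ℝ) :=
  convexHull ℝ {w | ∃ σ : Equiv.Perm (Fin n), ∀ i, w i = ((σ i : ℕ) : ℝ) + 1}

/-- E_m(t) = ∑_{j=0}^m t^j/j!, the degree-m Taylor polynomial of exp. -/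
def Etaylor (m : ℕ) (t : ℝ) : ℝ :=
  ∑ j ∈ Finset.range (m + 1), t ^ j / (Nat.factorial j)

end

/-!
A functional `u` is maximized on a Minkowski sum of simplices by maximizing it on each summand, so
the face of `Π_{n-1}(k-1)` exposed by `u` only records how `u` ranks the coordinates lying in the
set of maximizers of some `k`-subset, and which coordinates are too low for that. Such data form a
simplicial complex: chains of subsets together with fewer than `k` low elements. Face inclusion is
reverse inclusion in this complex and codimension is cardinality, that is, the polytope is simple.
A flag starting at the face of `W` is then a decreasing chain of subsets of `W`, and the binomial
theorem, applied once per variable, gives total weight `(x₂ + ⋯ + x_ℓ + 1) ^ |W|`.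

The elements of the complex with `r` low elements and `m` sets are the ordered partitions of
`{0, …, n-1}` into a part of size `r`, a part of size at least `k - r` and `m` nonempty parts, whose
exponential generating function is `z ^ r / r! * (e ^ z - E_{k-r-1}(z)) * (e ^ z - 1) ^ m`. Summing
over `m` against `1 / (m + r + 1)!` produces the second exponential of the formula.
-/

/-! ### Faces of Minkowski sums -/

section MaxFace

variable {ι E : Type*} [AddCommGroup E] [Module ℝ E]

/-- The face of `P` exposed by the functional `L`: the points of `P` at which `L` is maximal. -/
def maxFace (L : Module.Dual ℝ E) (P : Set E) : Set E :=
  {x ∈ P | ∀ y ∈ P, L y ≤ L x}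

theorem maxFace_subset (L : Module.Dual ℝ E) (P : Set E) : maxFace L P ⊆ P :=
  Set.sep_subset _ _

theorem add_mem_maxFace_add_iff {L : Module.Dual ℝ E} {A B : Set E} {a b : E}
    (ha : a ∈ A) (hb : b ∈ B) :
    a + b ∈ maxFace L (A + B) ↔ a ∈ maxFace L A ∧ b ∈ maxFace L B := by
  constructor
  · rintro ⟨-, hmax⟩
    refine ⟨⟨ha, fun y hy => ?_⟩, ⟨hb, fun y hy => ?_⟩⟩
    · simpa using hmax _ (Set.add_mem_add hy hb)
    · simpa using hmax _ (Set.add_mem_add ha hy)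
  · rintro ⟨⟨-, hmaxA⟩, ⟨-, hmaxB⟩⟩
    refine ⟨Set.add_mem_add ha hb, ?_⟩
    rintro _ ⟨a', ha', b', hb', rfl⟩
    simpa using add_le_add (hmaxA a' ha') (hmaxB b' hb')

theorem maxFace_add (L : Module.Dual ℝ E) (A B : Set E) :
    maxFace L (A + B) = maxFace L A + maxFace L B := by
  ext x
  constructor
  · intro hx
    obtain ⟨a, ha, b, hb, rfl⟩ := maxFace_subset L _ hx
    obtain ⟨ha', hb'⟩ := (add_mem_maxFace_add_iff ha hb).1 hx
    exact Set.add_mem_add ha' hb'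
  · rintro ⟨a, ha, b, hb, rfl⟩
    exact (add_mem_maxFace_add_iff (maxFace_subset L A ha) (maxFace_subset L B hb)).2 ⟨ha, hb⟩

@[simp]
theorem maxFace_zero_set (L : Module.Dual ℝ E) : maxFace L (0 : Set E) = 0 := by
  ext x
  simp only [maxFace, Set.mem_zero, forall_eq]
  exact ⟨And.left, fun hx => ⟨hx, by rw [hx]⟩⟩

theorem maxFace_sum (L : Module.Dual ℝ E) (s : Finset ι) (A : ι → Set E) :
    maxFace L (∑ i ∈ s, A i) = ∑ i ∈ s, maxFace L (A i) :=
  map_sum (⟨⟨maxFace L, maxFace_zero_set L⟩, maxFace_add L⟩ : Set E →+ Set E) A s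

@[simp]
theorem maxFace_zero (P : Set E) : maxFace 0 P = P := by
  simp [maxFace]

theorem maxFace_add_subset_iff {L M : Module.Dual ℝ E} {A B : Set E}
    (hA : (maxFace L A).Nonempty) (hB : (maxFace L B).Nonempty) :
    maxFace L (A + B) ⊆ maxFace M (A + B) ↔
      maxFace L A ⊆ maxFace M A ∧ maxFace L B ⊆ maxFace M B := by
  rw [maxFace_add]
  constructor
  · intro h
    have hsplit : ∀ a ∈ maxFace L A, ∀ b ∈ maxFace L B, a ∈ maxFace M A ∧ b ∈ maxFace M B :=
      fun a ha b hb => (add_mem_maxFace_add_iff (maxFace_subset L A ha)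
        (maxFace_subset L B hb)).1 (h (Set.add_mem_add ha hb))
    exact ⟨fun a ha => (hsplit a ha _ hB.some_mem).1, fun b hb => (hsplit _ hA.some_mem b hb).2⟩
  · rintro ⟨hAM, hBM⟩
    rw [maxFace_add]
    exact Set.add_subset_add hAM hBM

theorem maxFace_sum_subset_iff {L M : Module.Dual ℝ E} {s : Finset ι} {A : ι → Set E}
    (hA : ∀ i ∈ s, (maxFace L (A i)).Nonempty) :
    maxFace L (∑ i ∈ s, A i) ⊆ maxFace M (∑ i ∈ s, A i) ↔
      ∀ i ∈ s, maxFace L (A i) ⊆ maxFace M (A i) := by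
  classical
  induction s using Finset.induction with
  | empty => simp
  | insert j s hj ih =>
    rw [Finset.forall_mem_insert] at hA
    have hsum : (maxFace L (∑ i ∈ s, A i)).Nonempty := by
      rw [maxFace_sum]
      choose! a ha using hA.2
      exact ⟨_, Set.finsetSum_mem_finsetSum s _ a fun i hi => ha i hi⟩
    rw [Finset.sum_insert hj, maxFace_add_subset_iff hA.1 hsum, ih hA.2, Finset.forall_mem_insert]

theorem subset_maxFace_iff {L : Module.Dual ℝ E} {P : Set E} :
    P ⊆ maxFace L P ↔ L ∈ (vectorSpan ℝ P).dualAnnihilator := by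
  rw [vectorSpan_def, Submodule.mem_dualAnnihilator]
  change _ ↔ Submodule.span ℝ (P -ᵥ P) ≤ LinearMap.ker L
  rw [Submodule.span_le]
  constructor
  · rintro h _ ⟨a, ha, b, hb, rfl⟩
    have hab : L a = L b := le_antisymm ((h hb).2 a ha) ((h ha).2 b hb)
    simp [hab]
  · intro h a ha
    refine ⟨ha, fun b hb => le_of_eq ?_⟩
    have hab := h ⟨b, hb, a, ha, rfl⟩
    simpa [sub_eq_zero] using hab

end MaxFace

section Argmax

variable {ι α : Type*} [LinearOrder α]

/-- The elements of `F` at which `u` is largest on `F`. -/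
def argmaxOn (u : ι → α) (F : Finset ι) : Finset ι :=
  {a ∈ F | ∀ b ∈ F, u b ≤ u a}

theorem mem_argmaxOn {u : ι → α} {F : Finset ι} {a : ι} :
    a ∈ argmaxOn u F ↔ a ∈ F ∧ ∀ b ∈ F, u b ≤ u a :=
  Finset.mem_filter

theorem argmaxOn_subset (u : ι → α) (F : Finset ι) : argmaxOn u F ⊆ F :=
  Finset.filter_subset _ _

theorem argmaxOn_nonempty (u : ι → α) {F : Finset ι} (hF : F.Nonempty) :
    (argmaxOn u F).Nonempty := by
  obtain ⟨a, ha, hmax⟩ := F.exists_max_image u hF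
  exact ⟨a, mem_argmaxOn.2 ⟨ha, hmax⟩⟩

end Argmax

section SimplexSum

variable {n : ℕ}

theorem single_mem_stdSimplexOn_iff {F : Finset (Fin n)} {a : Fin n} :
    Pi.single a 1 ∈ stdSimplexOn n F ↔ a ∈ F := by
  constructor
  · rintro ⟨-, hsupp, -⟩
    by_contra ha
    simpa using hsupp a ha
  · intro ha
    refine ⟨fun i => ?_, fun i hi => ?_, by simp⟩
    · obtain rfl | hia := eq_or_ne i a <;> simp [*]
    · exact Pi.single_eq_of_ne (by rintro rfl; exact hi ha) _

theorem stdSimplexOn_nonempty {F : Finset (Fin n)} (hF : F.Nonempty) :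
    (stdSimplexOn n F).Nonempty :=
  ⟨_, single_mem_stdSimplexOn_iff.2 hF.choose_spec⟩

theorem stdSimplexOn_subset_iff {F G : Finset (Fin n)} :
    stdSimplexOn n F ⊆ stdSimplexOn n G ↔ F ⊆ G := by
  constructor
  · exact fun h a ha => single_mem_stdSimplexOn_iff.1 (h (single_mem_stdSimplexOn_iff.2 ha))
  · rintro h x ⟨hnonneg, hsupp, hsum⟩
    exact ⟨hnonneg, fun i hi => hsupp i fun hiF => hi (h hiF), hsum⟩

theorem sub_dotProduct_of_mem_stdSimplexOn {F : Finset (Fin n)} {x : Fin n → ℝ}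
    (hx : x ∈ stdSimplexOn n F) (u : Fin n → ℝ) (c : ℝ) :
    c - u ⬝ᵥ x = ∑ i, (c - u i) * x i := by
  simp only [sub_mul, Finset.sum_sub_distrib, ← Finset.mul_sum, hx.2.2, mul_one, dotProduct]

theorem sub_mul_nonneg_of_mem_stdSimplexOn {F : Finset (Fin n)} {x : Fin n → ℝ}
    (hx : x ∈ stdSimplexOn n F) {u : Fin n → ℝ} {c : ℝ} (hc : ∀ b ∈ F, u b ≤ c) (i : Fin n) :
    0 ≤ (c - u i) * x i := by
  by_cases hi : i ∈ F
  · exact mul_nonneg (sub_nonneg.2 (hc i hi)) (hx.1 i)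
  · simp [hx.2.1 i hi]

theorem maxFace_stdSimplexOn (u : Fin n → ℝ) {F : Finset (Fin n)} (hF : F.Nonempty) :
    maxFace (dotProductEquiv ℝ (Fin n) u) (stdSimplexOn n F) =
      stdSimplexOn n (argmaxOn u F) := by
  obtain ⟨a, ha⟩ := argmaxOn_nonempty u hF
  obtain ⟨haF, hmax⟩ := mem_argmaxOn.1 ha
  ext x
  constructor
  · rintro ⟨hx, hxmax⟩
    have hgap : ∑ i, (u a - u i) * x i ≤ 0 := by
      have := hxmax _ (single_mem_stdSimplexOn_iff.2 haF)
      rw [← sub_dotProduct_of_mem_stdSimplexOn hx]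
      simpa using this
    have hzero := (Finset.sum_eq_zero_iff_of_nonneg fun i _ =>
      sub_mul_nonneg_of_mem_stdSimplexOn hx hmax i).1
        (hgap.antisymm (Finset.sum_nonneg fun i _ => sub_mul_nonneg_of_mem_stdSimplexOn hx hmax i))
    refine ⟨hx.1, fun i hi => ?_, hx.2.2⟩
    refine (mul_eq_zero.1 (hzero i (Finset.mem_univ i))).elim (fun hai => ?_) id
    refine hx.2.1 i fun hiF => hi (mem_argmaxOn.2 ⟨hiF, ?_⟩)
    rwa [← sub_eq_zero.1 hai]
  · intro hx
    have hxF := stdSimplexOn_subset_iff.2 (argmaxOn_subset u F) hx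
    refine ⟨hxF, fun y hy => ?_⟩
    have hxa : u a - u ⬝ᵥ x = 0 := by
      rw [sub_dotProduct_of_mem_stdSimplexOn hx]
      refine Finset.sum_eq_zero fun i _ => mul_eq_zero.2 ?_
      by_cases hi : i ∈ argmaxOn u F
      · exact .inl (sub_eq_zero.2 (((mem_argmaxOn.1 hi).2 a haF).antisymm
          (hmax i (argmaxOn_subset u F hi))))
      · exact .inr (hx.2.1 i hi)
    have hya : 0 ≤ u a - u ⬝ᵥ y := by
      rw [sub_dotProduct_of_mem_stdSimplexOn hy]
      exact Finset.sum_nonneg fun i _ => sub_mul_nonneg_of_mem_stdSimplexOn hy hmax i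
    simp only [dotProductEquiv_apply_apply]
    linarith

theorem maxFace_sum_stdSimplexOn (u : Fin n → ℝ) {𝓕 : Finset (Finset (Fin n))}
    (h𝓕 : ∀ F ∈ 𝓕, F.Nonempty) :
    maxFace (dotProductEquiv ℝ (Fin n) u) (∑ F ∈ 𝓕, stdSimplexOn n F) =
      ∑ F ∈ 𝓕, stdSimplexOn n (argmaxOn u F) := by
  rw [maxFace_sum]
  exact Finset.sum_congr rfl fun F hF => maxFace_stdSimplexOn u (h𝓕 F hF)

theorem maxFace_sum_stdSimplexOn_nonempty (u : Fin n → ℝ) {𝓕 : Finset (Finset (Fin n))}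
    (h𝓕 : ∀ F ∈ 𝓕, F.Nonempty) :
    (maxFace (dotProductEquiv ℝ (Fin n) u) (∑ F ∈ 𝓕, stdSimplexOn n F)).Nonempty := by
  rw [maxFace_sum_stdSimplexOn u h𝓕]
  choose! x hx using fun F hF => stdSimplexOn_nonempty (argmaxOn_nonempty u (h𝓕 F hF))
  exact ⟨_, Set.finsetSum_mem_finsetSum 𝓕 _ x hx⟩

theorem maxFace_sum_stdSimplexOn_subset_iff {u v : Fin n → ℝ} {𝓕 : Finset (Finset (Fin n))}
    (h𝓕 : ∀ F ∈ 𝓕, F.Nonempty) :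
    maxFace (dotProductEquiv ℝ (Fin n) u) (∑ F ∈ 𝓕, stdSimplexOn n F) ⊆
        maxFace (dotProductEquiv ℝ (Fin n) v) (∑ F ∈ 𝓕, stdSimplexOn n F) ↔
      ∀ F ∈ 𝓕, argmaxOn u F ⊆ argmaxOn v F := by
  rw [maxFace_sum_subset_iff]
  · refine forall₂_congr fun F hF => ?_
    rw [maxFace_stdSimplexOn u (h𝓕 F hF), maxFace_stdSimplexOn v (h𝓕 F hF),
      stdSimplexOn_subset_iff]
  · intro F hF
    rw [maxFace_stdSimplexOn u (h𝓕 F hF)]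
    exact stdSimplexOn_nonempty (argmaxOn_nonempty u (h𝓕 F hF))

theorem mem_dualAnnihilator_vectorSpan_maxFace_sum_stdSimplexOn_iff {u v : Fin n → ℝ}
    {𝓕 : Finset (Finset (Fin n))} (h𝓕 : ∀ F ∈ 𝓕, F.Nonempty) :
    dotProductEquiv ℝ (Fin n) v ∈ (vectorSpan ℝ (maxFace (dotProductEquiv ℝ (Fin n) u)
        (∑ F ∈ 𝓕, stdSimplexOn n F))).dualAnnihilator ↔
      ∀ F ∈ 𝓕, argmaxOn u F ⊆ argmaxOn v (argmaxOn u F) := by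
  rw [← subset_maxFace_iff, maxFace_sum_stdSimplexOn u h𝓕]
  nth_rw 1 [← maxFace_zero (∑ F ∈ 𝓕, stdSimplexOn n (argmaxOn u F))]
  rw [maxFace_sum_subset_iff]
  · refine forall₂_congr fun F hF => ?_
    rw [maxFace_zero, maxFace_stdSimplexOn v (argmaxOn_nonempty u (h𝓕 F hF)),
      stdSimplexOn_subset_iff]
  · intro F hF
    rw [maxFace_zero]
    exact stdSimplexOn_nonempty (argmaxOn_nonempty u (h𝓕 F hF))

end SimplexSum

/-! ### Combinatorics of the faces of the general permutahedron -/

section Ranking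

variable {ι α β : Type*} [Fintype ι] [LinearOrder α] [LinearOrder β]
  {k : ℕ} {u : ι → α} {v : ι → β}

/-- The elements ranked strictly above `a` by `u`. -/
def strictUpper (u : ι → α) (a : ι) : Finset ι :=
  {c | u a < u c}

@[simp]
theorem mem_strictUpper {a c : ι} : c ∈ strictUpper u a ↔ u a < u c := by
  simp [strictUpper]

theorem strictUpper_subset_iff {a b : ι} : strictUpper u a ⊆ strictUpper u b ↔ u b ≤ u a := by
  constructor
  · intro h
    by_contra! hab
    simpa using h (mem_strictUpper.2 hab)
  · exact fun h c hc => mem_strictUpper.2 (h.trans_lt (mem_strictUpper.1 hc))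

theorem strictUpper_inj {a b : ι} : strictUpper u a = strictUpper u b ↔ u a = u b := by
  rw [Finset.Subset.antisymm_iff, strictUpper_subset_iff, strictUpper_subset_iff, le_antisymm_iff,
    and_comm]

/-- At least `k` elements are ranked no higher than `a` by `u`; for `1 ≤ k` this says that `u`
attains its maximum on some `k`-element set at `a`. -/
def IsHigh (k : ℕ) (u : ι → α) (a : ι) : Prop :=
  k ≤ Finset.card {c | u c ≤ u a}

instance (k : ℕ) (u : ι → α) : DecidablePred (IsHigh k u) :=
  fun _ => Nat.decLe _ _

theorem isHigh_iff_add_card_strictUpper_le {a : ι} :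
    IsHigh k u a ↔ k + (strictUpper u a).card ≤ Fintype.card ι := by
  have hcompl : Finset.card {c | u c ≤ u a} + (strictUpper u a).card = Fintype.card ι := by
    simpa [strictUpper] using
      Finset.card_filter_add_card_filter_not (s := Finset.univ) fun c => u c ≤ u a
  rw [IsHigh, ← hcompl, add_le_add_iff_right]

theorem IsHigh.of_le {a b : ι} (ha : IsHigh k u a) (hab : u a ≤ u b) : IsHigh k u b :=
  ha.trans (Finset.card_le_card fun c hc => by
    simp only [Finset.mem_filter_univ] at hc ⊢
    exact hc.trans hab)

theorem exists_mem_argmaxOn_iff (hk : 2 ≤ k) {a b : ι} :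
    (∃ F : Finset ι, F.card = k ∧ a ∈ argmaxOn u F ∧ b ∈ F) ↔ IsHigh k u a ∧ u b ≤ u a := by
  classical
  constructor
  · rintro ⟨F, hFk, ha, hb⟩
    obtain ⟨-, hmax⟩ := mem_argmaxOn.1 ha
    refine ⟨?_, hmax b hb⟩
    rw [IsHigh, ← hFk]
    exact Finset.card_le_card fun c hc => by simpa using hmax c hc
  · rintro ⟨ha, hba⟩
    obtain ⟨F, hpair, hF, hFk⟩ :=
      Finset.exists_subsuperset_card_eq (s := {a, b}) (t := {c | u c ≤ u a})
        (by simp [Finset.insert_subset_iff, hba]) (Finset.card_le_two.trans hk) ha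
    refine ⟨F, hFk, mem_argmaxOn.2 ⟨hpair (by simp), fun c hc => ?_⟩, hpair (by simp)⟩
    simpa using hF hc

theorem forall_argmaxOn_subset_iff (hk : 2 ≤ k) :
    (∀ F : Finset ι, F.card = k → argmaxOn u F ⊆ argmaxOn v F) ↔
      ∀ a b, IsHigh k u a → u b ≤ u a → v b ≤ v a := by
  constructor
  · intro h a b ha hba
    obtain ⟨F, hFk, haF, hbF⟩ := (exists_mem_argmaxOn_iff hk).2 ⟨ha, hba⟩
    exact (mem_argmaxOn.1 (h F hFk haF)).2 b hbF
  · intro h F hFk a ha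
    refine mem_argmaxOn.2 ⟨argmaxOn_subset u F ha, fun b hb => ?_⟩
    obtain ⟨haHigh, hba⟩ := (exists_mem_argmaxOn_iff hk).1 ⟨F, hFk, ha, hb⟩
    exact h a b haHigh hba

theorem forall_argmaxOn_subset_argmaxOn_iff (hk : 2 ≤ k) :
    (∀ F : Finset ι, F.card = k → argmaxOn u F ⊆ argmaxOn v (argmaxOn u F)) ↔
      ∀ a b, IsHigh k u a → u a = u b → v a = v b := by
  constructor
  · intro h a b ha hab
    obtain ⟨F, hFk, haF, hbF⟩ := (exists_mem_argmaxOn_iff hk).2 ⟨ha, hab.ge⟩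
    have hbF' : b ∈ argmaxOn u F :=
      mem_argmaxOn.2 ⟨hbF, fun c hc => hab ▸ (mem_argmaxOn.1 haF).2 c hc⟩
    exact ((mem_argmaxOn.1 (h F hFk hbF')).2 a haF).antisymm
      ((mem_argmaxOn.1 (h F hFk haF)).2 b hbF')
  · intro h F hFk a ha
    refine mem_argmaxOn.2 ⟨ha, fun b hb => ?_⟩
    obtain ⟨haHigh, hba⟩ := (exists_mem_argmaxOn_iff hk).1 ⟨F, hFk, ha, argmaxOn_subset u F hb⟩
    have hab := (mem_argmaxOn.1 hb).2 a (argmaxOn_subset u F ha)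
    exact (h a b haHigh (hab.antisymm hba)).ge

theorem exists_isHigh_strictUpper_eq_empty (hk : 0 < k) (hn : k ≤ Fintype.card ι) (u : ι → α) :
    ∃ a, IsHigh k u a ∧ strictUpper u a = ∅ := by
  have : Nonempty ι := Fintype.card_pos_iff.1 (by omega)
  obtain ⟨a, -, hmax⟩ := Finset.univ.exists_max_image u Finset.univ_nonempty
  have hempty : strictUpper u a = ∅ := by
    simpa [Finset.eq_empty_iff_forall_notMem] using hmax
  exact ⟨a, isHigh_iff_add_card_strictUpper_le.2 (by simpa [hempty] using hn), hempty⟩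

/-- A name for the block containing `a` in the partition of `ι` attached to the face of the general
permutahedron exposed by `u`: the high elements are grouped by their `u`-value, a group being named
by the set of elements above it, and every other element forms a block of its own. -/
def blockLabel (k : ℕ) (u : ι → α) (a : ι) : Finset ι ⊕ ι :=
  if IsHigh k u a then .inl (strictUpper u a) else .inr a

theorem blockLabel_eq_iff {a b : ι} :
    blockLabel k u a = blockLabel k u b ↔ a = b ∨ IsHigh k u a ∧ u a = u b := by
  constructor
  · intro h
    unfold blockLabel at h
    split_ifs at h with ha hb
    · exact .inr ⟨ha, strictUpper_inj.1 (Sum.inl_injective h)⟩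
    · exact .inl (Sum.inr_injective h)
  · rintro (rfl | ⟨ha, hab⟩)
    · rfl
    · rw [blockLabel, blockLabel, if_pos ha, if_pos (ha.of_le hab.le), strictUpper_inj.2 hab]

variable [DecidableEq ι]

/-- The combinatorial type of the face of the general permutahedron exposed by `u`, recorded as the
set of facets containing it: `inl U` is the facet exposed by the indicator function of `U`, and
`inr a` the facet `x a = 0`. -/
def faceCode (k : ℕ) (u : ι → α) : Finset (Finset ι ⊕ ι) :=
  (Finset.univ.image (blockLabel k u)).erase (.inl ∅)

theorem inl_mem_faceCode {U : Finset ι} :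
    .inl U ∈ faceCode k u ↔ U.Nonempty ∧ ∃ a, IsHigh k u a ∧ strictUpper u a = U := by
  simp only [faceCode, blockLabel, Finset.mem_erase, Finset.mem_image, Finset.mem_univ, true_and,
    ne_eq, Sum.inl.injEq, ← Finset.nonempty_iff_ne_empty]
  refine and_congr_right fun _ => exists_congr fun a => ?_
  split_ifs with ha <;> simp [ha]

@[simp]
theorem inr_mem_faceCode {a : ι} : .inr a ∈ faceCode k u ↔ ¬ IsHigh k u a := by
  simp only [faceCode, blockLabel, Finset.mem_erase, Finset.mem_image, Finset.mem_univ, true_and,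
    ne_eq, reduceCtorEq, not_false_eq_true]
  constructor
  · rintro ⟨b, hb⟩
    split_ifs at hb with hbHigh
    exact Sum.inr_injective hb ▸ hbHigh
  · exact fun ha => ⟨a, if_neg ha⟩

theorem inl_mem_faceCode_iff_closed (hk : 0 < k) {U : Finset ι} :
    .inl U ∈ faceCode k u ↔ U.Nonempty ∧ k + U.card ≤ Fintype.card ι ∧
      ∀ a b, IsHigh k u a → u b ≤ u a → b ∈ U → a ∈ U := by
  rw [inl_mem_faceCode]
  refine and_congr_right fun _ => ⟨?_, ?_⟩
  · rintro ⟨a, ha, rfl⟩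
    refine ⟨isHigh_iff_add_card_strictUpper_le.1 ha, fun b c _ hcb hc => ?_⟩
    exact mem_strictUpper.2 ((mem_strictUpper.1 hc).trans_le hcb)
  · rintro ⟨hcard, hclosed⟩
    have hne : (Uᶜ).Nonempty := by
      rw [← Finset.card_pos, Finset.card_compl]
      omega
    obtain ⟨a, haU, hmax⟩ := Uᶜ.exists_max_image u hne
    have ha : IsHigh k u a := by
      calc k ≤ (Uᶜ).card := by rw [Finset.card_compl]; omega
        _ ≤ _ := Finset.card_le_card fun c hc => by simpa using hmax c hc
    refine ⟨a, ha, Finset.ext fun c => ?_⟩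
    rw [mem_strictUpper]
    constructor
    · intro hac
      by_contra hc
      exact hac.not_ge (hmax c (Finset.mem_compl.2 hc))
    · intro hc
      by_contra! hca
      exact Finset.mem_compl.1 haU (hclosed a c ha hca hc)

theorem faceCode_subset_faceCode_iff (hk : 0 < k) :
    faceCode k v ⊆ faceCode k u ↔ ∀ a b, IsHigh k u a → u b ≤ u a → v b ≤ v a := by
  constructor
  · intro h a b ha hba
    by_contra! hab
    have haV : IsHigh k v a := by
      by_contra haV
      exact inr_mem_faceCode.1 (h (inr_mem_faceCode.2 haV)) ha
    have hmem := h (inl_mem_faceCode.2 ⟨⟨b, mem_strictUpper.2 hab⟩, a, haV, rfl⟩)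
    simpa using ((inl_mem_faceCode_iff_closed hk).1 hmem).2.2 a b ha hba (mem_strictUpper.2 hab)
  · intro h
    have hHigh : ∀ a, IsHigh k u a → IsHigh k v a := fun a ha =>
      ha.trans (Finset.card_le_card fun c hc => by simpa using h a c ha (by simpa using hc))
    rintro (U | a) hmem
    · rw [inl_mem_faceCode_iff_closed hk] at hmem ⊢
      exact ⟨hmem.1, hmem.2.1, fun a b ha hba => hmem.2.2 a b (hHigh a ha) (h a b ha hba)⟩
    · rw [inr_mem_faceCode] at hmem ⊢
      exact fun ha => hmem (hHigh a ha)

theorem card_faceCode_add_one (hk : 0 < k) (hn : k ≤ Fintype.card ι) (u : ι → α) :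
    (faceCode k u).card + 1 = (Finset.univ.image (blockLabel k u)).card := by
  obtain ⟨a, ha, hempty⟩ := exists_isHigh_strictUpper_eq_empty hk hn u
  refine Finset.card_erase_add_one (Finset.mem_image.2 ⟨a, Finset.mem_univ a, ?_⟩)
  rw [blockLabel, if_pos ha, hempty]

end Ranking

section Dimension

theorem finrank_add_card_image_eq_card {ι κ : Type*} [Fintype ι] [DecidableEq ι] [DecidableEq κ]
    {W : Submodule ℝ (ι → ℝ)} {π : ι → κ}
    (hW : ∀ v, dotProductEquiv ℝ ι v ∈ W.dualAnnihilator ↔ ∀ a b, π a = π b → v a = v b) :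
    Module.finrank ℝ W + (Finset.univ.image π).card = Fintype.card ι := by
  let toBlock : ι → Finset.univ.image π := fun a =>
    ⟨π a, Finset.mem_image_of_mem π (Finset.mem_univ a)⟩
  have hsurj : Function.Surjective toBlock := by
    rintro ⟨_, hb⟩
    obtain ⟨a, -, rfl⟩ := Finset.mem_image.1 hb
    exact ⟨a, rfl⟩
  let pullback : (Finset.univ.image π → ℝ) →ₗ[ℝ] Module.Dual ℝ (ι → ℝ) :=
    (dotProductEquiv ℝ ι).toLinearMap ∘ₗ LinearMap.funLeft ℝ ℝ toBlock
  have hrange : LinearMap.range pullback = W.dualAnnihilator := by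
    ext L
    obtain ⟨v, rfl⟩ := (dotProductEquiv ℝ ι).surjective L
    rw [hW]
    constructor
    · rintro ⟨w, hw⟩ a b hab
      rw [← (dotProductEquiv ℝ ι).injective hw]
      exact congrArg w (Subtype.ext hab)
    · intro hv
      refine ⟨fun b => v (Function.surjInv hsurj b), congrArg (dotProductEquiv ℝ ι)
        (funext fun a => hv _ _ ?_)⟩
      exact congrArg Subtype.val (Function.surjInv_eq hsurj (toBlock a))
  have hinj : Function.Injective pullback :=
    (dotProductEquiv ℝ ι).injective.comp (LinearMap.funLeft_injective_of_surjective ℝ ℝ _ hsurj)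
  have hfinrank := LinearMap.finrank_range_of_inj hinj
  rw [hrange, Module.finrank_fintype_fun_eq_card, Fintype.card_coe] at hfinrank
  rw [← hfinrank, Subspace.finrank_add_finrank_dualAnnihilator_eq,
    Module.finrank_fintype_fun_eq_card]

end Dimension

section GenPermFaces

variable {n k : ℕ} {u v : Fin n → ℝ}

/-- The face of the general permutahedron exposed by the functional `x ↦ u ⬝ᵥ x`. -/
def genPermFace (k : ℕ) (u : Fin n → ℝ) : Set (Fin n → ℝ) :=
  maxFace (dotProductEquiv ℝ (Fin n) u) (genPerm n k)

theorem nonempty_of_mem_powersetCard {ι : Type*} {s F : Finset ι} (hk : 0 < k)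
    (hF : F ∈ s.powersetCard k) : F.Nonempty :=
  Finset.card_pos.1 ((Finset.mem_powersetCard.1 hF).2 ▸ hk)

theorem isExpFace_genPerm_iff (hk : 0 < k) {A : Set (Fin n → ℝ)} :
    IsExpFace (genPerm n k) A ↔ ∃ u : Fin n → ℝ, genPermFace k u = A := by
  constructor
  · rintro ⟨-, L, rfl⟩
    obtain ⟨u, rfl⟩ := (dotProductEquiv ℝ (Fin n)).surjective L
    exact ⟨u, rfl⟩
  · rintro ⟨u, rfl⟩
    exact ⟨maxFace_sum_stdSimplexOn_nonempty u fun F hF => nonempty_of_mem_powersetCard hk hF,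
      dotProductEquiv ℝ (Fin n) u, rfl⟩

theorem genPermFace_subset_iff (hk : 2 ≤ k) :
    genPermFace k u ⊆ genPermFace k v ↔ faceCode k v ⊆ faceCode k u := by
  rw [faceCode_subset_faceCode_iff (by omega), ← forall_argmaxOn_subset_iff hk]
  unfold genPermFace genPerm
  rw [maxFace_sum_stdSimplexOn_subset_iff fun F hF => nonempty_of_mem_powersetCard (by omega) hF]
  simp only [Finset.mem_powersetCard_univ]

theorem setDim_genPermFace (hk : 2 ≤ k) (hn : k ≤ n) (u : Fin n → ℝ) :
    setDim (genPermFace k u) + (faceCode k u).card + 1 = n := by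
  have hannihilator : ∀ v, dotProductEquiv ℝ (Fin n) v ∈
      (vectorSpan ℝ (genPermFace k u)).dualAnnihilator ↔
        ∀ a b, blockLabel k u a = blockLabel k u b → v a = v b := by
    intro v
    unfold genPermFace genPerm
    rw [mem_dualAnnihilator_vectorSpan_maxFace_sum_stdSimplexOn_iff
      fun F hF => nonempty_of_mem_powersetCard (by omega) hF]
    simp only [Finset.mem_powersetCard_univ]
    rw [forall_argmaxOn_subset_argmaxOn_iff hk]
    refine forall₂_congr fun a b => ?_
    rw [blockLabel_eq_iff]
    grind
  rw [add_assoc, card_faceCode_add_one (by omega) (by simpa using hn), setDim,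
    direction_affineSpan, finrank_add_card_image_eq_card hannihilator, Fintype.card_fin]

end GenPermFaces

section FaceCodes

variable {ι α β : Type*} [Fintype ι] [LinearOrder α] [LinearOrder β] {k : ℕ}

/-- The intrinsic description of the sets `faceCode k u`: a chain of nonempty sets, each omitting at
least `k` elements, together with fewer than `k` elements outside all of them. -/
structure IsFaceCode (k : ℕ) (W : Finset (Finset ι ⊕ ι)) : Prop where
  nonempty : ∀ U, .inl U ∈ W → U.Nonempty
  add_card_le : ∀ U, .inl U ∈ W → k + U.card ≤ Fintype.card ι
  chain : ∀ U V, .inl U ∈ W → .inl V ∈ W → U ⊆ V ∨ V ⊆ U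
  notMem : ∀ U a, .inl U ∈ W → .inr a ∈ W → a ∉ U
  card_toRight_lt : W.toRight.card < k

theorem IsFaceCode.mono {W W' : Finset (Finset ι ⊕ ι)} (hW : IsFaceCode k W) (h : W' ⊆ W) :
    IsFaceCode k W' where
  nonempty U hU := hW.nonempty U (h hU)
  add_card_le U hU := hW.add_card_le U (h hU)
  chain U V hU hV := hW.chain U V (h hU) (h hV)
  notMem U a hU ha := hW.notMem U a (h hU) (h ha)
  card_toRight_lt := (Finset.card_le_card (Finset.toRight_subset_toRight h)).trans_lt
    hW.card_toRight_lt

theorem card_filter_not_isHigh_lt (hk : 0 < k) (u : ι → α) :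
    Finset.card {a | ¬ IsHigh k u a} < k := by
  by_contra! hcard
  obtain ⟨a, ha, hmax⟩ := Finset.exists_max_image _ u (Finset.card_pos.1 (hk.trans_le hcard))
  refine (Finset.mem_filter_univ _).1 ha (hcard.trans (Finset.card_le_card fun c hc => ?_))
  simpa using hmax c hc

variable [DecidableEq ι]

theorem isFaceCode_faceCode (hk : 0 < k) (u : ι → α) : IsFaceCode k (faceCode k u) where
  nonempty U hU := (inl_mem_faceCode.1 hU).1
  add_card_le U hU := ((inl_mem_faceCode_iff_closed hk).1 hU).2.1
  chain U V hU hV := by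
    obtain ⟨-, a, -, rfl⟩ := inl_mem_faceCode.1 hU
    obtain ⟨-, b, -, rfl⟩ := inl_mem_faceCode.1 hV
    rw [strictUpper_subset_iff, strictUpper_subset_iff]
    exact le_total _ _
  notMem U a hU ha haU := by
    obtain ⟨-, b, hb, rfl⟩ := inl_mem_faceCode.1 hU
    exact inr_mem_faceCode.1 ha (hb.of_le (mem_strictUpper.1 haU).le)
  card_toRight_lt := by
    convert card_filter_not_isHigh_lt hk u using 2
    ext a
    simp

theorem faceCode_comp_strictMono {g : α → β} (hg : StrictMono g) (u : ι → α) :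
    faceCode k (g ∘ u) = faceCode k u := by
  have hlabel : blockLabel k (g ∘ u) = blockLabel k u := by
    funext a
    simp only [blockLabel, IsHigh, strictUpper, Function.comp_apply, hg.le_iff_le, hg.lt_iff_lt]
  rw [faceCode, faceCode, hlabel]

/-- The ranking with code `W`: an element of `W.toRight` has level `0`, and any other element one
more than the number of members of the chain `W.toLeft` that contain it. -/
def codeLevel (W : Finset (Finset ι ⊕ ι)) (a : ι) : ℕ :=
  Finset.card {U ∈ W.toLeft | a ∈ U} + if .inr a ∈ W then 0 else 1

theorem IsFaceCode.codeLevel_eq_zero_iff {W : Finset (Finset ι ⊕ ι)} (hW : IsFaceCode k W) {a : ι} :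
    codeLevel W a = 0 ↔ .inr a ∈ W := by
  by_cases ha : .inr a ∈ W
  · simp only [codeLevel, ha, if_true, add_zero, iff_true, Finset.card_eq_zero,
      Finset.filter_eq_empty_iff, Finset.mem_toLeft]
    exact fun U hU => hW.notMem U a hU ha
  · simp [codeLevel, ha]

theorem IsFaceCode.codeLevel_lt_iff {W : Finset (Finset ι ⊕ ι)} (hW : IsFaceCode k W) {a b : ι} :
    codeLevel W b < codeLevel W a ↔
      (∃ U, .inl U ∈ W ∧ a ∈ U ∧ b ∉ U) ∨ .inr b ∈ W ∧ .inr a ∉ W := by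
  constructor
  · contrapose!
    rintro ⟨hsub, hright⟩
    refine Nat.add_le_add (Finset.card_le_card fun U hU => ?_) ?_
    · simp only [Finset.mem_filter, Finset.mem_toLeft] at hU ⊢
      exact ⟨hU.1, hsub U hU.1 hU.2⟩
    · split_ifs with ha hb hb
      exacts [le_rfl, zero_le_one, absurd (hright hb) ha, le_rfl]
  · rintro (⟨U, hU, haU, hbU⟩ | ⟨hb, ha⟩)
    · have ha : .inr a ∉ W := fun ha => hW.notMem U a hU ha haU
      refine Nat.add_lt_add_of_lt_of_le (Finset.card_lt_card ?_) (by split_ifs <;> simp)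
      refine (Finset.ssubset_iff_of_subset fun V hV => ?_).2 ⟨U, by simp [hU, haU], by simp [hbU]⟩
      simp only [Finset.mem_filter, Finset.mem_toLeft] at hV ⊢
      have hUV := (hW.chain U V hU hV.1).resolve_right fun hVU => hbU (hVU hV.2)
      exact ⟨hV.1, hUV haU⟩
    · rw [hW.codeLevel_eq_zero_iff.2 hb, Nat.pos_iff_ne_zero]
      exact fun h => ha (hW.codeLevel_eq_zero_iff.1 h)

theorem IsFaceCode.strictUpper_codeLevel {W : Finset (Finset ι ⊕ ι)} (hW : IsFaceCode k W) {a : ι}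
    (ha : .inr a ∉ W) :
    strictUpper (codeLevel W) a = ∅ ∨ .inl (strictUpper (codeLevel W) a) ∈ W := by
  have hmem : ∀ c, c ∈ strictUpper (codeLevel W) a ↔ ∃ U, .inl U ∈ W ∧ c ∈ U ∧ a ∉ U := by
    simp [hW.codeLevel_lt_iff, ha]
  obtain hempty | hne := (W.toLeft.filter (a ∉ ·)).eq_empty_or_nonempty
  · refine .inl (Finset.eq_empty_of_forall_notMem fun c hc => ?_)
    obtain ⟨U, hU, -, haU⟩ := (hmem c).1 hc
    exact Finset.filter_eq_empty_iff.1 hempty (Finset.mem_toLeft.2 hU) haU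
  · obtain ⟨U, hU, hmax⟩ := Finset.exists_max_image _ Finset.card hne
    simp only [Finset.mem_filter, Finset.mem_toLeft] at hU hmax
    suffices strictUpper (codeLevel W) a = U from .inr (this ▸ hU.1)
    ext c
    rw [hmem]
    refine ⟨?_, fun hc => ⟨U, hU.1, hc, hU.2⟩⟩
    rintro ⟨V, hV, hcV, haV⟩
    obtain hUV | hVU := hW.chain U V hU.1 hV
    · rwa [Finset.eq_of_subset_of_card_le hUV (hmax V ⟨hV, haV⟩)]
    · exact hVU hcV

theorem IsFaceCode.isHigh_codeLevel_iff {W : Finset (Finset ι ⊕ ι)} (hW : IsFaceCode k W)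
    (hn : k ≤ Fintype.card ι) {a : ι} : IsHigh k (codeLevel W) a ↔ .inr a ∉ W := by
  constructor
  · intro hHigh ha
    refine hHigh.not_gt ((Finset.card_le_card fun c hc => ?_).trans_lt hW.card_toRight_lt)
    rw [Finset.mem_filter_univ, hW.codeLevel_eq_zero_iff.2 ha, nonpos_iff_eq_zero,
      hW.codeLevel_eq_zero_iff] at hc
    exact Finset.mem_toRight.2 hc
  · intro ha
    rw [isHigh_iff_add_card_strictUpper_le]
    obtain hempty | hmem := hW.strictUpper_codeLevel ha
    · simpa [hempty] using hn
    · exact hW.add_card_le _ hmem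

theorem IsFaceCode.faceCode_codeLevel {W : Finset (Finset ι ⊕ ι)} (hW : IsFaceCode k W)
    (hk : 0 < k) (hn : k ≤ Fintype.card ι) : faceCode k (codeLevel W) = W := by
  ext (U | a)
  · constructor
    · intro hU
      obtain ⟨hne, a, ha, rfl⟩ := inl_mem_faceCode.1 hU
      exact (hW.strictUpper_codeLevel ((hW.isHigh_codeLevel_iff hn).1 ha)).resolve_left
        hne.ne_empty
    · intro hU
      refine (inl_mem_faceCode_iff_closed hk).2
        ⟨hW.nonempty U hU, hW.add_card_le U hU, fun a b _ hba hb => ?_⟩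
      by_contra ha
      exact hba.not_gt (hW.codeLevel_lt_iff.2 (.inl ⟨U, hU, hb, ha⟩))
  · rw [inr_mem_faceCode, hW.isHigh_codeLevel_iff hn, not_not]

theorem IsFaceCode.faceCode_cast_codeLevel {W : Finset (Finset ι ⊕ ι)} (hW : IsFaceCode k W)
    (hk : 0 < k) (hn : k ≤ Fintype.card ι) : faceCode k (fun a => (codeLevel W a : ℝ)) = W :=
  (faceCode_comp_strictMono Nat.strictMono_cast _).trans (hW.faceCode_codeLevel hk hn)

end FaceCodes

section HighValues

variable {ι α : Type*} [Fintype ι] [LinearOrder α] {k : ℕ}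

/-- The values taken by `u` on its high elements. -/
def highValues (k : ℕ) (u : ι → α) : Finset α :=
  Finset.image u {a | IsHigh k u a}

theorem mem_highValues {u : ι → α} {t : α} : t ∈ highValues k u ↔ ∃ a, IsHigh k u a ∧ u a = t := by
  simp [highValues]

theorem injOn_highValues (u : ι → α) :
    Set.InjOn (fun t => ({c | t < u c} : Finset ι)) (highValues k u) := by
  intro s hs t ht hst
  obtain ⟨a, -, rfl⟩ := mem_highValues.1 hs
  obtain ⟨b, -, rfl⟩ := mem_highValues.1 ht
  exact strictUpper_inj.1 hst

variable [DecidableEq ι]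

theorem toLeft_faceCode (u : ι → α) : (faceCode k u).toLeft =
    ((highValues k u).image fun t => ({c | t < u c} : Finset ι)).erase ∅ := by
  ext U
  simp only [Finset.mem_toLeft, inl_mem_faceCode, Finset.mem_erase, Finset.mem_image,
    mem_highValues, Finset.nonempty_iff_ne_empty, ne_eq]
  refine and_congr_right fun _ => ⟨?_, ?_⟩
  · rintro ⟨a, ha, rfl⟩
    exact ⟨u a, ⟨a, ha, rfl⟩, rfl⟩
  · rintro ⟨_, ⟨a, ha, rfl⟩, rfl⟩
    exact ⟨a, ha, rfl⟩

theorem card_toLeft_faceCode_add_one (hk : 0 < k) (hn : k ≤ Fintype.card ι) (u : ι → α) :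
    (faceCode k u).toLeft.card + 1 = (highValues k u).card := by
  obtain ⟨a, ha, hempty⟩ := exists_isHigh_strictUpper_eq_empty hk hn u
  rw [toLeft_faceCode, Finset.card_erase_add_one, Finset.card_image_of_injOn (injOn_highValues u)]
  exact Finset.mem_image.2 ⟨u a, mem_highValues.2 ⟨a, ha, rfl⟩, hempty⟩

theorem codeLevel_faceCode (u : ι → α) (c : ι) :
    codeLevel (faceCode k u) c = Finset.card {t ∈ highValues k u | t ≤ u c} := by
  have hbelow : Finset.card {U ∈ (faceCode k u).toLeft | c ∈ U} =
      Finset.card {t ∈ highValues k u | t < u c} := by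
    rw [← Finset.card_image_of_injOn ((injOn_highValues u).mono (Finset.filter_subset _ _))]
    congr 1
    ext U
    simp only [toLeft_faceCode, Finset.mem_filter, Finset.mem_erase, Finset.mem_image]
    grind
  rw [codeLevel, hbelow]
  by_cases hc : IsHigh k u c
  · rw [if_neg (by simpa using hc), ← Finset.card_insert_of_notMem (a := u c) (by simp)]
    congr 1
    ext t
    simp only [Finset.mem_insert, Finset.mem_filter, le_iff_lt_or_eq]
    grind [mem_highValues]
  · rw [if_pos (by simpa using hc), add_zero]
    congr 1
    refine Finset.filter_congr fun t ht => ⟨le_of_lt, fun htc => ?_⟩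
    obtain ⟨a, ha, rfl⟩ := mem_highValues.1 ht
    exact absurd (ha.of_le htc) hc

end HighValues

theorem codeLevel_lt_card_toLeft_add_two {ι : Type*} [DecidableEq ι]
    (W : Finset (Finset ι ⊕ ι)) (a : ι) : codeLevel W a < W.toLeft.card + 2 := by
  have := Finset.card_filter_le W.toLeft (a ∈ ·)
  unfold codeLevel
  split_ifs <;> omega

section LevelFunctions

variable {ι : Type*} [Fintype ι] {k r m : ℕ}

/-- `f` is an ordered partition of `ι` into a bottom part of `r` elements and `m + 1` parts above
it, those parts being nonempty and the two lowest parts together having at least `k` elements.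
For `r < k` these are exactly the rankings `codeLevel W`. -/
structure IsLevelFun (k r : ℕ) (f : ι → Fin (m + 2)) : Prop where
  card_zero : Finset.card {a | f a = 0} = r
  le_add_card_one : k ≤ r + Finset.card {a | f a = 1}
  exists_eq_succ_succ : ∀ i : Fin m, ∃ a, f a = i.succ.succ

theorem IsLevelFun.add_le_card {f : ι → Fin (m + 2)} (hf : IsLevelFun k r f) :
    k + m ≤ Fintype.card ι := by
  have hm : m ≤ ∑ i : Fin m, Finset.card {a | f a = i.succ.succ} := by
    simpa using Finset.card_nsmul_le_sum Finset.univ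
      (fun i : Fin m => Finset.card {a | f a = i.succ.succ}) 1 fun i _ =>
        Finset.card_pos.2 ((hf.exists_eq_succ_succ i).imp fun a ha => by simpa using ha)
  rw [← Finset.card_univ, Finset.card_eq_sum_card_fiberwise (f := f) (t := Finset.univ) (by simp),
    Fin.sum_univ_succ, Fin.sum_univ_succ, hf.card_zero, ← add_assoc]
  exact add_le_add hf.le_add_card_one hm

theorem IsLevelFun.isHigh_iff {f : ι → Fin (m + 2)} (hf : IsLevelFun k r f) (hr : r < k) {a : ι} :
    IsHigh k f a ↔ f a ≠ 0 := by
  constructor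
  · intro ha h0
    simp only [IsHigh, h0, Fin.le_zero_iff, hf.card_zero] at ha
    omega
  · intro ha
    have hdisj : Disjoint (Finset.univ.filter (f · = 0)) (Finset.univ.filter (f · = 1)) :=
      Finset.disjoint_filter.2 fun c _ h0 h1 => by simp [h0] at h1
    have hle : ∀ c, f c = 0 ∨ f c = 1 → f c ≤ f a := by
      rintro c (hc | hc) <;> rw [hc]
      exacts [Fin.zero_le _, Fin.one_le_of_ne_zero ha]
    calc k ≤ r + Finset.card {c | f c = 1} := hf.le_add_card_one
      _ = (Finset.disjUnion _ _ hdisj).card := by rw [← hf.card_zero, Finset.card_disjUnion]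
      _ ≤ Finset.card {c | f c ≤ f a} :=
        Finset.card_le_card fun c hc => by simpa using hle c (by simpa using hc)

theorem IsLevelFun.highValues_eq {f : ι → Fin (m + 2)} (hf : IsLevelFun k r f) (hr : r < k) :
    highValues k f = Finset.univ.erase 0 := by
  ext t
  simp only [mem_highValues, hf.isHigh_iff hr, Finset.mem_erase, Finset.mem_univ, and_true]
  constructor
  · rintro ⟨a, ha, rfl⟩
    exact ha
  · intro ht
    suffices ∃ a, f a = t from this.imp fun a ha => ⟨ha.trans_ne ht, ha⟩
    obtain ⟨t, rfl⟩ := Fin.exists_succ_eq.2 ht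
    refine Fin.cases ?_ hf.exists_eq_succ_succ t
    have hone : 0 < Finset.card {a | f a = 1} := by
      have := hf.le_add_card_one
      omega
    obtain ⟨a, ha⟩ := Finset.card_pos.1 hone
    exact ⟨a, by simpa using ha⟩

variable [DecidableEq ι]

theorem IsLevelFun.codeLevel_faceCode {f : ι → Fin (m + 2)} (hf : IsLevelFun k r f) (hr : r < k)
    (a : ι) : codeLevel (faceCode k f) a = f a := by
  have : ({t ∈ Finset.univ.erase 0 | t ≤ f a} : Finset (Fin (m + 2))) = Finset.Ioc 0 (f a) := by
    ext t
    simp [Fin.pos_iff_ne_zero]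
  rw [_root_.codeLevel_faceCode, hf.highValues_eq hr, this, Fin.card_Ioc, Fin.val_zero,
    Nat.sub_zero]

theorem IsLevelFun.card_toLeft_faceCode {f : ι → Fin (m + 2)} (hf : IsLevelFun k r f) (hr : r < k) :
    (faceCode k f).toLeft.card = m := by
  have hn : k ≤ Fintype.card ι := (Nat.le_add_right k m).trans hf.add_le_card
  have := card_toLeft_faceCode_add_one (by omega) hn f
  rw [hf.highValues_eq hr, Finset.card_erase_of_mem (Finset.mem_univ _), Finset.card_univ,
    Fintype.card_fin] at this
  omega

theorem IsLevelFun.card_toRight_faceCode {f : ι → Fin (m + 2)} (hf : IsLevelFun k r f)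
    (hr : r < k) : (faceCode k f).toRight.card = r := by
  rw [← hf.card_zero]
  congr 1
  ext a
  simp [hf.isHigh_iff hr]

theorem IsFaceCode.highValues_codeLevel {W : Finset (Finset ι ⊕ ι)} (hW : IsFaceCode k W)
    (hk : 0 < k) (hn : k ≤ Fintype.card ι) :
    highValues k (codeLevel W) = Finset.Icc 1 (W.toLeft.card + 1) := by
  refine Finset.eq_of_subset_of_card_le (fun t ht => ?_) ?_
  · obtain ⟨a, ha, rfl⟩ := mem_highValues.1 ht
    have hpos : codeLevel W a ≠ 0 := fun h =>
      (hW.isHigh_codeLevel_iff hn).1 ha (hW.codeLevel_eq_zero_iff.1 h)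
    have hlt := codeLevel_lt_card_toLeft_add_two W a
    exact Finset.mem_Icc.2 ⟨by omega, by omega⟩
  · have := card_toLeft_faceCode_add_one hk hn (codeLevel W)
    rw [hW.faceCode_codeLevel hk hn] at this
    rw [Nat.card_Icc, ← this, Nat.add_sub_cancel]

theorem IsFaceCode.isLevelFun {W : Finset (Finset ι ⊕ ι)} (hW : IsFaceCode k W) (hk : 0 < k)
    (hn : k ≤ Fintype.card ι) :
    IsLevelFun k W.toRight.card
      fun a => (⟨codeLevel W a, codeLevel_lt_card_toLeft_add_two W a⟩ : Fin (_ + 2)) := by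
  have hattained : ∀ t ∈ Finset.Icc 1 (W.toLeft.card + 1),
      ∃ a, IsHigh k (codeLevel W) a ∧ codeLevel W a = t := fun t ht => by
    rwa [← mem_highValues, hW.highValues_codeLevel hk hn]
  have hzero : ({a | codeLevel W a = 0} : Finset ι) = W.toRight := by
    ext a
    simp [hW.codeLevel_eq_zero_iff]
  constructor
  · simp only [← hzero, Fin.ext_iff, Fin.val_zero]
  · obtain ⟨a, ha, ha1⟩ := hattained 1 (by simp)
    refine ha.trans ?_
    simp only [← hzero, ha1, Fin.ext_iff, Fin.val_one]
    refine (Finset.card_le_card fun c hc => ?_).trans (Finset.card_union_le _ _)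
    simp only [Finset.mem_union, Finset.mem_filter_univ] at hc ⊢
    omega
  · intro i
    obtain ⟨a, -, ha⟩ := hattained (i + 2) (by simp)
    exact ⟨a, Fin.ext (by simpa using ha)⟩

open Classical in
theorem card_faceCodes_eq_card_levelFuns (hn : k ≤ Fintype.card ι) (hr : r < k) :
    Finset.card {W : Finset (Finset ι ⊕ ι) |
        IsFaceCode k W ∧ W.toRight.card = r ∧ W.toLeft.card = m} =
      Finset.card {f : ι → Fin (m + 2) | IsLevelFun k r f} := by
  have hk : 0 < k := by omega
  symm
  refine Finset.card_bij (fun f _ => faceCode k f) ?_ ?_ ?_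
  · intro f hf
    rw [Finset.mem_filter_univ] at hf ⊢
    exact ⟨isFaceCode_faceCode hk f, hf.card_toRight_faceCode hr, hf.card_toLeft_faceCode hr⟩
  · intro f hf g hg hfg
    rw [Finset.mem_filter_univ] at hf hg
    funext a
    rw [Fin.ext_iff, ← hf.codeLevel_faceCode hr, ← hg.codeLevel_faceCode hr, hfg]
  · intro W hW
    rw [Finset.mem_filter_univ] at hW
    obtain ⟨hW, rfl, rfl⟩ := hW
    refine ⟨_, (Finset.mem_filter_univ _).2 (hW.isLevelFun hk hn), ?_⟩
    rw [← faceCode_comp_strictMono Fin.val_strictMono]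
    exact hW.faceCode_codeLevel hk hn

end LevelFunctions

/-! ### Flag polynomials of simple polytopes -/

section ChainSums

variable {E R : Type*} [CommSemiring R] {l : ℕ}

open Classical in
/-- The contribution to the flag polynomial of the successive codimension jumps of a decreasing
chain of sets, and `0` for tuples that are not decreasing. -/
noncomputable def chainWeight (x : Fin l → R) (V : Fin (l + 1) → Finset E) : R :=
  if Antitone V then ∏ i, x i ^ ((V i.castSucc).card - (V i.succ).card) else 0

theorem chainWeight_cons [DecidableEq E] (x : Fin (l + 1) → R) (W : Finset E)
    (V : Fin (l + 1) → Finset E) :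
    chainWeight x (Fin.cons W V : Fin (l + 2) → Finset E) =
      if V 0 ⊆ W then x 0 ^ (W.card - (V 0).card) * chainWeight (Fin.tail x) V else 0 := by
  have hanti : Antitone (Fin.cons W V : Fin (l + 2) → Finset E) ↔ V 0 ⊆ W ∧ Antitone V :=
    antitone_vecCons
  simp only [chainWeight, hanti, Fin.prod_univ_succ, Fin.castSucc_zero, Fin.cons_zero,
    Fin.cons_succ, ← Fin.succ_castSucc, Fin.tail, mul_ite, mul_zero, ite_and]

theorem sum_fin_cons {α M : Type*} [Fintype α] [AddCommMonoid M] (F : (Fin (l + 1) → α) → M) :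
    ∑ V, F V = ∑ a, ∑ V : Fin l → α, F (Fin.cons a V) := by
  rw [← Fintype.sum_prod_type', ← (Fin.consEquiv fun _ => α).sum_comp]
  rfl

theorem sum_chainWeight_cons [Fintype E] (x : Fin l → R) (W : Finset E) :
    ∑ V : Fin l → Finset E, chainWeight x (Fin.cons W V : Fin (l + 1) → Finset E) =
      (∑ i, x i + 1) ^ W.card := by
  classical
  induction l generalizing W with
  | zero =>
    have hanti : ∀ V : Fin 1 → Finset E, Antitone V := Subsingleton.antitone
    simp [chainWeight, hanti]
  | succ l ih =>
    calc ∑ V : Fin (l + 1) → Finset E, chainWeight x (Fin.cons W V : Fin (l + 2) → Finset E)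
        = ∑ W', if W' ⊆ W then
            x 0 ^ (W.card - W'.card) * (∑ i, Fin.tail x i + 1) ^ W'.card else 0 := by
          rw [sum_fin_cons]
          simp only [chainWeight_cons, Fin.cons_zero, ← Finset.ite_sum_zero, ← Finset.mul_sum, ih]
      _ = ∑ W' ∈ W.powerset, (∑ i, Fin.tail x i + 1) ^ W'.card * x 0 ^ (W.card - W'.card) := by
          rw [← Finset.sum_filter]
          exact Finset.sum_congr (by ext; simp) fun _ _ => mul_comm _ _
      _ = (∑ i, x i + 1) ^ W.card := by
          rw [Finset.sum_pow_mul_eq_add_pow, Fin.sum_univ_succ]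
          congr 1
          simp only [Fin.tail]
          ring

end ChainSums

section FlagPolynomial

variable {n l : ℕ} {P : Set (Fin n → ℝ)} {E : Type*} {K : Finset (Finset E)}
  {face : Finset E → Set (Fin n → ℝ)}

/-- The polytope `P`, of dimension `n - 1`, is simple: its nonempty faces correspond to the members
of the simplicial complex `K`, inclusion being reversed and `W ∈ K` having codimension `W.card`. -/
structure IsSimpleFaceCoding (P : Set (Fin n → ℝ)) (K : Finset (Finset E))
    (face : Finset E → Set (Fin n → ℝ)) : Prop where
  isExpFace_iff : ∀ A, IsExpFace P A ↔ ∃ W ∈ K, face W = A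
  face_subset_iff : ∀ W ∈ K, ∀ W' ∈ K, face W ⊆ face W' ↔ W' ⊆ W
  setDim_add_card : ∀ W ∈ K, setDim (face W) + W.card + 1 = n
  mem_of_subset : ∀ W ∈ K, ∀ W' ⊆ W, W' ∈ K

theorem flag_monomial_eq {V : Fin (l + 1) → Finset E} (hV : Antitone V) (hn : (V 0).card + 1 ≤ n)
    {s : Fin (l + 1) → Fin n} (hs : ∀ i, n - 1 - (V i).card = s i) (x : Fin (l + 1) → ℝ) :
    ((n - (s 0 : ℕ)).factorial : ℝ)⁻¹ * ∏ i : Fin (l + 1), x i ^ (if (i : ℕ) = 0 then (s i : ℕ) else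
        (s i : ℕ) - (s ⟨(i : ℕ) - 1, lt_of_le_of_lt (Nat.sub_le _ _) i.isLt⟩ : ℕ)) =
      x 0 ^ (n - 1 - (V 0).card) / ((V 0).card + 1).factorial *
        chainWeight (fun i => x i.succ) V := by
  have hfactorial : n - (n - 1 - (V 0).card) = (V 0).card + 1 := by omega
  have hjump : ∀ i : Fin l, n - 1 - (V i.succ).card - (n - 1 - (V i.castSucc).card) =
      (V i.castSucc).card - (V i.succ).card := fun i => by
    have := Finset.card_le_card (hV (Fin.zero_le i.castSucc))
    omega
  rw [chainWeight, if_pos hV, Fin.prod_univ_succ]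
  simp only [← hs, hfactorial, Fin.val_zero, if_true, Fin.val_succ, Nat.succ_ne_zero, if_false,
    Nat.add_sub_cancel, div_eq_inv_mul, mul_assoc]
  exact congrArg _ (congrArg _ (Finset.prod_congr rfl fun i _ => congrArg _ (hjump i)))

namespace IsSimpleFaceCoding

theorem setDim_face (h : IsSimpleFaceCoding P K face) {W : Finset E} (hW : W ∈ K) :
    setDim (face W) = n - 1 - W.card := by
  have := h.setDim_add_card W hW
  omega

theorem injOn_face (h : IsSimpleFaceCoding P K face) : Set.InjOn face K := by
  intro W hW W' hW' heq
  exact ((h.face_subset_iff W' hW' W hW).1 heq.ge).antisymm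
    ((h.face_subset_iff W hW W' hW').1 heq.le)

variable [Fintype E]

open Classical in
theorem flagCount_eq (h : IsSimpleFaceCoding P K face) (s : Fin l → ℕ) :
    flagCount P l s = Finset.card {V : Fin l → Finset E |
      (∀ i, V i ∈ K) ∧ Antitone V ∧ ∀ i, n - 1 - (V i).card = s i} := by
  set chains : Finset (Fin l → Finset E) :=
    {V | (∀ i, V i ∈ K) ∧ Antitone V ∧ ∀ i, n - 1 - (V i).card = s i}
  have mem_chains : ∀ {V}, V ∈ chains ↔
      (∀ i, V i ∈ K) ∧ Antitone V ∧ ∀ i, n - 1 - (V i).card = s i := Finset.mem_filter_univ _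
  have himage : {A : Fin l → Set (Fin n → ℝ) |
      (∀ i, IsExpFace P (A i) ∧ setDim (A i) = s i) ∧ ∀ i j, i ≤ j → A i ⊆ A j} =
      (face ∘ ·) '' (chains : Set (Fin l → Finset E)) := by
    ext A
    constructor
    · rintro ⟨hface, hmono⟩
      choose V hV hVA using fun i => (h.isExpFace_iff (A i)).1 (hface i).1
      obtain rfl : face ∘ V = A := funext hVA
      exact ⟨V, mem_chains.2 ⟨hV,
        fun i j hij => (h.face_subset_iff _ (hV i) _ (hV j)).1 (hmono i j hij),
        fun i => h.setDim_face (hV i) ▸ (hface i).2⟩, rfl⟩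
    · rintro ⟨V, hVchain, rfl⟩
      obtain ⟨hV, hanti, hdim⟩ := mem_chains.1 hVchain
      exact ⟨fun i =>
          ⟨(h.isExpFace_iff _).2 ⟨V i, hV i, rfl⟩, (h.setDim_face (hV i)).trans (hdim i)⟩,
        fun i j hij => (h.face_subset_iff _ (hV i) _ (hV j)).2 (hanti hij)⟩
  have hinj : Set.InjOn (face ∘ ·) (chains : Set (Fin l → Finset E)) := fun V hV V' hV' heq =>
    funext fun i => h.injOn_face ((mem_chains.1 hV).1 i) ((mem_chains.1 hV').1 i) (congrFun heq i)
  rw [← Set.ncard_coe_finset, ← hinj.ncard_image, ← himage]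
  rfl

open Classical in
theorem flagCount_summand_eq (h : IsSimpleFaceCoding P K face) (x : Fin (l + 1) → ℝ)
    (s : Fin (l + 1) → Fin n) :
    (if Monotone s then
      ((flagCount P (l + 1) (fun i => (s i : ℕ)) : ℝ) / (Nat.factorial (n - (s 0 : ℕ)))) *
        ∏ i : Fin (l + 1), x i ^ (if (i : ℕ) = 0 then (s i : ℕ) else
          (s i : ℕ) - (s ⟨(i : ℕ) - 1, lt_of_le_of_lt (Nat.sub_le _ _) i.isLt⟩ : ℕ))
      else 0) =
      ∑ V : Fin (l + 1) → Finset E with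
        (∀ i, V i ∈ K) ∧ Antitone V ∧ ∀ i, n - 1 - (V i).card = s i,
        x 0 ^ (n - 1 - (V 0).card) / ((V 0).card + 1).factorial *
          chainWeight (fun i => x i.succ) V := by
  split_ifs with hs
  · rw [h.flagCount_eq, div_mul_eq_mul_div, mul_div_assoc, ← nsmul_eq_mul, ← Finset.sum_const]
    refine Finset.sum_congr rfl fun V hV => ?_
    obtain ⟨hVK, hanti, hdim⟩ := (Finset.mem_filter_univ _).1 hV
    have := h.setDim_add_card (V 0) (hVK 0)
    rw [← flag_monomial_eq hanti (by omega) hdim, div_eq_inv_mul]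
  · refine (Finset.sum_eq_zero fun V hV => absurd (fun i j hij => ?_) hs).symm
    obtain ⟨-, hanti, hdim⟩ := (Finset.mem_filter_univ _).1 hV
    rw [Fin.le_def, ← hdim i, ← hdim j]
    have := Finset.card_le_card (hanti hij)
    omega

open Classical in
theorem sum_chains_chainWeight (h : IsSimpleFaceCoding P K face) (c : Finset E → ℝ)
    (x : Fin l → ℝ) :
    ∑ V : Fin (l + 1) → Finset E with (∀ i, V i ∈ K) ∧ Antitone V, c (V 0) * chainWeight x V =
      ∑ W ∈ K, c W * (∑ i, x i + 1) ^ W.card := by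
  have hextend : ∀ V : Fin (l + 1) → Finset E, c (V 0) * chainWeight x V ≠ 0 →
      ((∀ i, V i ∈ K) ∧ Antitone V ↔ V 0 ∈ K) := fun V hV => by
    have hanti : Antitone V := by
      by_contra hanti
      exact hV (by rw [chainWeight, if_neg hanti, mul_zero])
    exact ⟨fun hVK => hVK.1 0,
      fun h0 => ⟨fun i => h.mem_of_subset _ h0 _ (hanti (Fin.zero_le i)), hanti⟩⟩
  calc ∑ V : Fin (l + 1) → Finset E with (∀ i, V i ∈ K) ∧ Antitone V, c (V 0) * chainWeight x V
      = ∑ V : Fin (l + 1) → Finset E with V 0 ∈ K, c (V 0) * chainWeight x V := by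
        rw [Finset.sum_filter, Finset.sum_filter]
        refine Finset.sum_congr rfl fun V _ => ?_
        by_cases hV : c (V 0) * chainWeight x V = 0
        · simp only [hV, ite_self]
        · simp only [hextend V hV]
    _ = ∑ W, if W ∈ K then c W * (∑ i, x i + 1) ^ W.card else 0 := by
        rw [Finset.sum_filter, sum_fin_cons]
        simp only [Fin.cons_zero, ← Finset.ite_sum_zero, ← Finset.mul_sum, sum_chainWeight_cons]
    _ = ∑ W ∈ K, c W * (∑ i, x i + 1) ^ W.card := by
        rw [← Finset.sum_filter, Finset.filter_univ_mem]

omit [Fintype E] in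
theorem xiFlag_eq [Finite E] (h : IsSimpleFaceCoding P K face) (hn : 0 < n)
    (x : Fin (l + 1) → ℝ) :
    xiFlag P l x = ∑ W ∈ K, x 0 ^ (n - 1 - W.card) / (W.card + 1).factorial *
      (∑ i : Fin l, x i.succ + 1) ^ W.card := by
  classical
  cases nonempty_fintype E
  let dims (V : Fin (l + 1) → Finset E) (i : Fin (l + 1)) : Fin n :=
    ⟨n - 1 - (V i).card, by omega⟩
  have hdims : ∀ V s, dims V = s ↔ ∀ i, n - 1 - (V i).card = s i := fun V s => by
    simp only [funext_iff, Fin.ext_iff, dims]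
  rw [xiFlag, ← h.sum_chains_chainWeight (fun W => x 0 ^ (n - 1 - W.card) / (W.card + 1).factorial),
    ← Finset.sum_fiberwise _ dims]
  refine Finset.sum_congr rfl fun s _ => ?_
  rw [h.flagCount_summand_eq, Finset.filter_filter]
  simp only [hdims, and_assoc]

end IsSimpleFaceCoding

end FlagPolynomial

section GenPermFlagPolynomial

variable {n k : ℕ}

theorem genPermFace_congr (hk : 2 ≤ k) {u v : Fin n → ℝ} (h : faceCode k u = faceCode k v) :
    genPermFace k u = genPermFace k v :=
  ((genPermFace_subset_iff hk).2 h.ge).antisymm ((genPermFace_subset_iff hk).2 h.le)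

open Classical in
theorem isSimpleFaceCoding_genPerm (hk : 2 ≤ k) (hn : k ≤ n) :
    IsSimpleFaceCoding (genPerm n k) {W | IsFaceCode k W}
      fun W => genPermFace k fun a => (codeLevel W a : ℝ) := by
  have hcode : ∀ {W : Finset (Finset (Fin n) ⊕ Fin n)}, IsFaceCode k W →
      faceCode k (fun a => (codeLevel W a : ℝ)) = W :=
    fun hW => hW.faceCode_cast_codeLevel (by omega) (by simpa using hn)
  constructor <;> simp only [Finset.mem_filter_univ]
  · intro A
    rw [isExpFace_genPerm_iff (by omega)]
    constructor
    · rintro ⟨u, rfl⟩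
      have hu := isFaceCode_faceCode (k := k) (by omega) u
      exact ⟨faceCode k u, hu, genPermFace_congr hk (hcode hu)⟩
    · rintro ⟨W, -, rfl⟩
      exact ⟨_, rfl⟩
  · intro W hW W' hW'
    rw [genPermFace_subset_iff hk, hcode hW, hcode hW']
  · intro W hW
    have := setDim_genPermFace hk hn fun a => (codeLevel W a : ℝ)
    rwa [hcode hW] at this
  · intro W hW W' hsub
    exact hW.mono hsub

open Classical in
theorem xiFlag_genPerm_eq (hk : 2 ≤ k) (hn : k ≤ n) {l : ℕ} (x : Fin (l + 1) → ℝ) :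
    xiFlag (genPerm n k) l x = ∑ r ∈ Finset.range k, ∑ m ∈ Finset.range n,
      Finset.card {f : Fin n → Fin (m + 2) | IsLevelFun k r f} *
        (x 0 ^ (n - 1 - (m + r)) / (m + r + 1).factorial *
          (∑ i : Fin l, x i.succ + 1) ^ (m + r)) := by
  let contribution (c : ℕ) : ℝ :=
    x 0 ^ (n - 1 - c) / (c + 1).factorial * (∑ i : Fin l, x i.succ + 1) ^ c
  have hcoding := isSimpleFaceCoding_genPerm hk hn
  calc xiFlag (genPerm n k) l x
      = ∑ W : Finset (Finset (Fin n) ⊕ Fin n) with IsFaceCode k W, contribution W.card :=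
        hcoding.xiFlag_eq (by omega) x
    _ = ∑ q ∈ Finset.range k ×ˢ Finset.range n, ∑ W : Finset (Finset (Fin n) ⊕ Fin n) with
          IsFaceCode k W ∧ (W.toRight.card, W.toLeft.card) = q, contribution W.card := by
        simp only [← Finset.filter_filter]
        refine (Finset.sum_fiberwise_of_maps_to (fun W hW => ?_) _).symm
        have hdim := hcoding.setDim_add_card W hW
        have hcard := W.card_toLeft_add_card_toRight
        have hright := ((Finset.mem_filter_univ _).1 hW).card_toRight_lt
        simp only [Finset.mem_product, Finset.mem_range]
        omega
    _ = ∑ r ∈ Finset.range k, ∑ m ∈ Finset.range n,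
          Finset.card {f : Fin n → Fin (m + 2) | IsLevelFun k r f} * contribution (m + r) := by
        rw [Finset.sum_product]
        refine Finset.sum_congr rfl fun r hr => Finset.sum_congr rfl fun m _ => ?_
        rw [← card_faceCodes_eq_card_levelFuns (by simpa using hn) (Finset.mem_range.1 hr),
          ← nsmul_eq_mul, ← Finset.sum_const]
        simp only [Prod.mk.injEq]
        refine Finset.sum_congr rfl fun W hW => ?_
        obtain ⟨-, hright, hleft⟩ := (Finset.mem_filter_univ _).1 hW
        rw [← hright, ← hleft, W.card_toLeft_add_card_toRight]

end GenPermFlagPolynomial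

/-! ### Counting face codes by exponential generating functions -/

section ExponentialFormula

variable {ι κ K : Type*} [Fintype ι] [DecidableEq ι] [Fintype κ] [DecidableEq κ] [Field K]

theorem card_funs_with_card_fibers_eq_multinomial {d : κ →₀ ℕ}
    (hd : d.sum (fun _ t => t) = Fintype.card ι) :
    Finset.card {f : ι → κ | ∀ i, Finset.card {a | f a = i} = d i} = d.multinomial := by
  have hmonomial : ∀ f : ι → κ, ∏ a, (MvPolynomial.X (f a) : MvPolynomial κ ℕ) =
      MvPolynomial.monomial
        (Finsupp.indicator Finset.univ fun i _ => Finset.card {a | f a = i}) 1 := fun f => by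
    rw [← Finset.prod_fiberwise' _ f MvPolynomial.X, ← MvPolynomial.prod_X_pow]
    simp only [Finset.prod_const]
  have hcoeff := MvPolynomial.coeff_sum_X_pow_of_fintype (R := ℕ) d (Fintype.card ι)
  rw [if_pos hd, ← Finset.card_univ, ← Finset.prod_const, Finset.prod_univ_sum,
    Fintype.piFinset_univ] at hcoeff
  simp only [hmonomial, MvPolynomial.coeff_sum, MvPolynomial.coeff_monomial] at hcoeff
  rw [← Nat.cast_id d.multinomial, ← hcoeff, Finset.card_filter]
  simp only [Finsupp.ext_iff, Finsupp.indicator_apply, Finset.mem_univ, dite_true]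

/-- The exponential generating function of a sequence of weights. -/
noncomputable def egf (w : ℕ → K) : PowerSeries K :=
  .mk fun t => w t / t.factorial

theorem sum_prod_card_fibers [CharZero K] (w : κ → ℕ → K) :
    ∑ f : ι → κ, ∏ i, w i (Finset.card {a | f a = i}) =
      (Fintype.card ι).factorial * PowerSeries.coeff (Fintype.card ι) (∏ i, egf (w i)) := by
  let fibers (f : ι → κ) : κ →₀ ℕ :=
    Finsupp.equivFunOnFinite.symm fun i => Finset.card {a | f a = i}
  have hfibers : ∀ f, fibers f ∈ Finset.finsuppAntidiag Finset.univ (Fintype.card ι) := fun f =>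
    Finset.mem_finsuppAntidiag.2 ⟨(Finset.card_eq_sum_card_fiberwise fun _ _ => by simp).symm,
      Finset.subset_univ _⟩
  rw [PowerSeries.coeff_prod, Finset.mul_sum,
    ← Finset.sum_fiberwise_of_maps_to fun f _ => hfibers f]
  refine Finset.sum_congr rfl fun d hd => ?_
  have hsum := (Finset.mem_finsuppAntidiag'.1 hd).1
  have hmultinomial : (∏ i, (d i).factorial) * d.multinomial = (Fintype.card ι).factorial := by
    rw [Finsupp.multinomial_eq_of_support_subset (Finset.subset_univ _), Nat.multinomial_spec,
      (Finset.mem_finsuppAntidiag.1 hd).1]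
  calc ∑ f with fibers f = d, ∏ i, w i (Finset.card {a | f a = i})
      = ∑ f : ι → κ with ∀ i, Finset.card {a | f a = i} = d i, ∏ i, w i (d i) := by
        simp only [fibers, Finsupp.ext_iff, Finsupp.equivFunOnFinite_symm_apply_apply]
        refine Finset.sum_congr rfl fun f hf => ?_
        simp only [(Finset.mem_filter_univ _).1 hf]
    _ = d.multinomial * ∏ i, w i (d i) := by
        rw [Finset.sum_const, card_funs_with_card_fibers_eq_multinomial hsum, nsmul_eq_mul]
    _ = (Fintype.card ι).factorial * ∏ i, PowerSeries.coeff (d i) (egf (w i)) := by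
        have hfactorial : (∏ i, ((d i).factorial : K)) ≠ 0 :=
          Finset.prod_ne_zero_iff.2 fun i _ => Nat.cast_ne_zero.2 (d i).factorial_ne_zero
        simp only [egf, PowerSeries.coeff_mk, Finset.prod_div_distrib, ← hmultinomial]
        push_cast
        field_simp

end ExponentialFormula

section LevelSeries

variable {ι : Type*} [Fintype ι] [DecidableEq ι] {k r m : ℕ}

/-- The exponential generating function of the level functions with `r` elements of level `0` and
top level `m + 1`, the factors accounting for the levels `0`, `1` and those above. -/
noncomputable def levelSeries (k r m : ℕ) : PowerSeries ℝ :=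
  egf (fun t => if t = r then 1 else 0) *
    (egf (fun t => if k - r ≤ t then 1 else 0) * egf (fun t => if 1 ≤ t then 1 else 0) ^ m)

open Classical in
theorem card_levelFuns_eq_coeff_levelSeries :
    Finset.card {f : ι → Fin (m + 2) | IsLevelFun k r f} =
      (Fintype.card ι).factorial * PowerSeries.coeff (Fintype.card ι) (levelSeries k r m) := by
  have hlevel : ∀ f : ι → Fin (m + 2), IsLevelFun k r f ↔
      Finset.card {a | f a = 0} = r ∧ k - r ≤ Finset.card {a | f a = 1} ∧
        ∀ i : Fin m, 1 ≤ Finset.card {a | f a = i.succ.succ} := fun f => by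
    have hfiber : ∀ i, 1 ≤ Finset.card {a | f a = i} ↔ ∃ a, f a = i := by
      simp [Nat.one_le_iff_ne_zero]
    simp only [hfiber, tsub_le_iff_left]
    exact ⟨fun ⟨h0, h1, h2⟩ => ⟨h0, h1, h2⟩, fun ⟨h0, h1, h2⟩ => ⟨h0, h1, h2⟩⟩
  have hfibers := sum_prod_card_fibers (ι := ι) (Fin.cons (fun t => if t = r then 1 else 0)
    (Fin.cons (fun t => if k - r ≤ t then 1 else 0) fun _ t => if 1 ≤ t then 1 else 0) :
      Fin (m + 2) → ℕ → ℝ)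
  simp only [Fin.prod_univ_succ, Fin.cons_zero, Fin.cons_succ, Finset.prod_const,
    Finset.card_univ, Fintype.card_fin, Fin.succ_zero_eq_one] at hfibers
  rw [levelSeries, ← hfibers, Finset.card_filter, Nat.cast_sum]
  refine Finset.sum_congr rfl fun f _ => ?_
  rw [Finset.prod_ite_zero, Finset.prod_const_one]
  simp only [hlevel, ite_zero_mul_ite_zero, mul_one, Nat.cast_ite, Nat.cast_one, Nat.cast_zero,
    Finset.mem_univ, true_imp_iff]
  congr

theorem coeff_levelSeries_nonneg (k r m n : ℕ) : 0 ≤ PowerSeries.coeff n (levelSeries k r m) := by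
  have hcard := card_levelFuns_eq_coeff_levelSeries (ι := Fin n) (k := k) (r := r) (m := m)
  rw [Fintype.card_fin] at hcard
  refine nonneg_of_mul_nonneg_right (hcard ▸ Nat.cast_nonneg _) ?_
  exact_mod_cast n.factorial_pos

theorem coeff_levelSeries_eq_zero {n : ℕ} (hn : n < k + m) :
    PowerSeries.coeff n (levelSeries k r m) = 0 := by
  classical
  have hcard := card_levelFuns_eq_coeff_levelSeries (ι := Fin n) (k := k) (r := r) (m := m)
  have hempty : ({f | IsLevelFun k r f} : Finset (Fin n → Fin (m + 2))) = ∅ :=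
    Finset.filter_eq_empty_iff.2 fun f _ hf => hn.not_ge (by simpa using hf.add_le_card)
  rw [hempty, Fintype.card_fin, Finset.card_empty, Nat.cast_zero, eq_comm, mul_eq_zero] at hcard
  exact hcard.resolve_left (by exact_mod_cast n.factorial_ne_zero)

end LevelSeries

section Evaluation

variable {P Q : PowerSeries ℝ} {z v w : ℝ}

/-- The power series `P` converges at `z`, with sum `v`. The convergence is absolute, since `HasSum`
is unconditional summation. -/
def EvaluatesTo (P : PowerSeries ℝ) (z v : ℝ) : Prop :=
  HasSum (fun n => PowerSeries.coeff n P * z ^ n) v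

theorem EvaluatesTo.mul (hP : EvaluatesTo P z v) (hQ : EvaluatesTo Q z w) :
    EvaluatesTo (P * Q) z (v * w) := by
  have hcauchy : ∀ n, PowerSeries.coeff n (P * Q) * z ^ n =
      ∑ p ∈ Finset.HasAntidiagonal.antidiagonal n,
        PowerSeries.coeff p.1 P * z ^ p.1 * (PowerSeries.coeff p.2 Q * z ^ p.2) := fun n => by
    rw [PowerSeries.coeff_mul, Finset.sum_mul]
    refine Finset.sum_congr rfl fun p hp => ?_
    rw [← Finset.HasAntidiagonal.mem_antidiagonal.1 hp, pow_add]
    ring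
  have hsum := tsum_mul_tsum_eq_tsum_sum_antidiagonal_of_summable_norm hP.summable.norm
    hQ.summable.norm
  rw [hP.tsum_eq, hQ.tsum_eq] at hsum
  rw [EvaluatesTo, hsum, funext hcauchy]
  exact (summable_norm_sum_mul_antidiagonal_of_summable_norm hP.summable.norm
    hQ.summable.norm).of_norm.hasSum

theorem evaluatesTo_one (z : ℝ) : EvaluatesTo 1 z 1 := by
  have hcoeff : ∀ n, PowerSeries.coeff n (1 : PowerSeries ℝ) * z ^ n = if n = 0 then 1 else 0 :=
    fun n => by cases n <;> simp [PowerSeries.coeff_one]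
  rw [EvaluatesTo, funext hcoeff]
  exact hasSum_ite_eq 0 1

theorem EvaluatesTo.pow (hP : EvaluatesTo P z v) (m : ℕ) : EvaluatesTo (P ^ m) z (v ^ m) := by
  induction m with
  | zero => simpa only [pow_zero] using evaluatesTo_one z
  | succ m ih => simpa only [pow_succ] using ih.mul hP

theorem evaluatesTo_egf_iff {c : ℕ → ℝ} :
    EvaluatesTo (egf c) z v ↔ HasSum (fun n => c n * (z ^ n / n.factorial)) v := by
  simp only [EvaluatesTo, egf, PowerSeries.coeff_mk, div_mul_eq_mul_div, mul_div_assoc]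

theorem evaluatesTo_egf_single (r : ℕ) (z : ℝ) :
    EvaluatesTo (egf fun t => if t = r then 1 else 0) z (z ^ r / r.factorial) := by
  rw [evaluatesTo_egf_iff]
  simpa using hasSum_single (f := fun n => if n = r then z ^ n / (n.factorial : ℝ) else 0) r
    fun n hn => if_neg hn

theorem hasSum_exp_sub_Etaylor (c : ℕ) (z : ℝ) :
    HasSum (fun t : ℕ => z ^ (t + (c + 1)) / (t + (c + 1)).factorial)
      (Real.exp z - Etaylor c z) := by
  refine (hasSum_nat_add_iff' (f := fun t => z ^ t / (t.factorial : ℝ)) (c + 1)).2 ?_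
  rw [Real.exp_eq_exp_ℝ]
  exact NormedSpace.expSeries_div_hasSum_exp z

theorem evaluatesTo_egf_tail (c : ℕ) (z : ℝ) :
    EvaluatesTo (egf fun t => if c + 1 ≤ t then 1 else 0) z (Real.exp z - Etaylor c z) := by
  rw [evaluatesTo_egf_iff]
  have hlow : ∑ t ∈ Finset.range (c + 1),
      (if c + 1 ≤ t then 1 else 0) * (z ^ t / (t.factorial : ℝ)) = 0 :=
    Finset.sum_eq_zero fun t ht => by rw [if_neg (Finset.mem_range.1 ht).not_ge, zero_mul]
  rw [← hasSum_nat_add_iff' (c + 1), hlow, sub_zero]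
  simpa using hasSum_exp_sub_Etaylor c z

theorem evaluatesTo_levelSeries {k r : ℕ} (hr : r < k) (m : ℕ) (z : ℝ) :
    EvaluatesTo (levelSeries k r m) z (z ^ r / r.factorial *
      ((Real.exp z - Etaylor (k - r - 1) z) * (Real.exp z - 1) ^ m)) := by
  have hbottom := evaluatesTo_egf_tail (k - r - 1) z
  rw [show k - r - 1 + 1 = k - r by omega] at hbottom
  have hnonempty : EvaluatesTo (egf fun t => if 1 ≤ t then 1 else 0) z (Real.exp z - 1) := by
    simpa [Etaylor] using evaluatesTo_egf_tail 0 z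
  exact (evaluatesTo_egf_single r z).mul (hbottom.mul (hnonempty.pow m))

end Evaluation

section GeneratingFunction

variable {k r : ℕ} {X S z : ℝ}

theorem summable_pow_div_factorial_add (c : ℕ) (t : ℝ) :
    Summable fun m : ℕ => t ^ m / ((m + c).factorial : ℝ) := by
  refine (Real.summable_pow_div_factorial t).norm.of_norm_bounded fun m => ?_
  rw [norm_div, norm_div, Real.norm_natCast, Real.norm_natCast]
  gcongr
  exact Nat.le_add_right m c

theorem hasSum_pow_div_factorial_add (c : ℕ) {t : ℝ} (ht : t ≠ 0) :
    HasSum (fun m : ℕ => t ^ m / ((m + (c + 1)).factorial : ℝ))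
      ((Real.exp t - Etaylor c t) / t ^ (c + 1)) := by
  refine ((hasSum_exp_sub_Etaylor c t).div_const (t ^ (c + 1))).congr_fun fun m => ?_
  rw [pow_add]
  field_simp

/-- The contribution to the coefficient of index `n` of the flag generating function at `z = X * y`
of the faces with code made of `r` elements and `m` sets. -/
noncomputable def flagTerm (k r : ℕ) (X S z : ℝ) (m n : ℕ) : ℝ :=
  PowerSeries.coeff n (levelSeries k r m) * z ^ n *
    (S ^ r / X ^ (r + 1) * ((S / X) ^ m / (m + (r + 1)).factorial))

theorem flagTerm_eq_zero {m n : ℕ} (hn : n < k + m) : flagTerm k r X S z m n = 0 := by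
  rw [flagTerm, coeff_levelSeries_eq_zero hn, zero_mul, zero_mul]

theorem norm_flagTerm (k r : ℕ) (X S z : ℝ) (m n : ℕ) :
    ‖flagTerm k r X S z m n‖ = flagTerm k r |X| |S| |z| m n := by
  simp only [flagTerm, norm_mul, norm_div, norm_pow,
    Real.norm_of_nonneg (coeff_levelSeries_nonneg k r m n), Real.norm_eq_abs, Nat.abs_cast]

theorem hasSum_flagTerm (hr : r < k) (X S z : ℝ) (m : ℕ) :
    HasSum (flagTerm k r X S z m)
      (z ^ r / r.factorial * (Real.exp z - Etaylor (k - r - 1) z) * (S ^ r / X ^ (r + 1)) *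
        ((S / X * (Real.exp z - 1)) ^ m / (m + (r + 1)).factorial)) := by
  have hvalue : z ^ r / r.factorial * (Real.exp z - Etaylor (k - r - 1) z) * (S ^ r / X ^ (r + 1)) *
        ((S / X * (Real.exp z - 1)) ^ m / (m + (r + 1)).factorial) =
      z ^ r / r.factorial * ((Real.exp z - Etaylor (k - r - 1) z) * (Real.exp z - 1) ^ m) *
        (S ^ r / X ^ (r + 1) * ((S / X) ^ m / (m + (r + 1)).factorial)) := by
    rw [mul_pow]
    ring
  rw [hvalue]
  exact (evaluatesTo_levelSeries hr m z).mul_right _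

theorem summable_flagTerm (hr : r < k) (X S z : ℝ) :
    Summable fun p : ℕ × ℕ => flagTerm k r X S z p.1 p.2 := by
  refine Summable.of_norm ((summable_prod_of_nonneg fun _ => norm_nonneg _).2 ⟨fun m => ?_, ?_⟩)
  · simpa only [norm_flagTerm] using (hasSum_flagTerm hr |X| |S| |z| m).summable
  · simp only [norm_flagTerm, (hasSum_flagTerm hr |X| |S| |z| _).tsum_eq]
    exact (summable_pow_div_factorial_add _ _).mul_left _

theorem tsum_tsum_flagTerm (hr : r < k) (hX : X ≠ 0) (hS : S ≠ 0) (hz : z ≠ 0) :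
    ∑' m, ∑' n, flagTerm k r X S z m n = 1 / S *
      (z ^ r * (Real.exp z - Etaylor (k - r - 1) z) / (r.factorial * (Real.exp z - 1) ^ (r + 1)) *
        (Real.exp (S / X * (Real.exp z - 1)) - Etaylor r (S / X * (Real.exp z - 1)))) := by
  have hexp : Real.exp z - 1 ≠ 0 := sub_ne_zero.2 fun h => hz ((Real.exp_eq_one_iff z).1 h)
  simp only [(hasSum_flagTerm hr X S z _).tsum_eq, tsum_mul_left,
    (hasSum_pow_div_factorial_add r (mul_ne_zero (div_ne_zero hS hX) hexp)).tsum_eq]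
  rw [mul_pow, div_pow]
  field_simp
  ring

theorem xiFlag_genPerm_mul_pow_div_factorial {n l : ℕ} (hk : 2 ≤ k) (hn : k ≤ n)
    {x : Fin (l + 1) → ℝ} (hx : x 0 ≠ 0) (y : ℝ) :
    xiFlag (genPerm n k) l x * y ^ n / n.factorial =
      ∑ r ∈ Finset.range k, ∑' m, flagTerm k r (x 0) (∑ i : Fin l, x i.succ + 1) (x 0 * y) m n := by
  classical
  rw [xiFlag_genPerm_eq hk hn, Finset.sum_mul, Finset.sum_div]
  refine Finset.sum_congr rfl fun r hr => ?_
  have hr := Finset.mem_range.1 hr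
  rw [tsum_eq_sum (s := Finset.range n) fun m hm =>
      flagTerm_eq_zero (by rw [Finset.mem_range] at hm; omega), Finset.sum_mul, Finset.sum_div]
  refine Finset.sum_congr rfl fun m _ => ?_
  rw [card_levelFuns_eq_coeff_levelSeries, Fintype.card_fin]
  obtain hlt | hle := lt_or_ge n (k + m)
  · rw [flagTerm_eq_zero hlt, coeff_levelSeries_eq_zero hlt]
    simp
  · have hpow : x 0 ^ n = x 0 ^ (n - 1 - (m + r)) * x 0 ^ m * x 0 ^ (r + 1) := by
      rw [← pow_add, ← pow_add]
      congr 1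
      omega
    rw [flagTerm, mul_pow, hpow, div_pow, pow_add _ m r, ← add_assoc m r 1]
    field_simp

theorem hasSum_tsum_flagTerm (hr : r < k) (X S z : ℝ) :
    HasSum (fun n => ∑' m, flagTerm k r X S z m n) (∑' m, ∑' n, flagTerm k r X S z m n) := by
  have hsum := summable_flagTerm hr X S z
  have hcomm : ∑' m, ∑' n, flagTerm k r X S z m n = ∑' n, ∑' m, flagTerm k r X S z m n :=
    (Summable.tsum_comm hsum).symm
  rw [hcomm]
  exact hsum.prod_symm.prod.hasSum

theorem hasSum_xiFlag_genPerm (hk : 2 ≤ k) {l : ℕ} {x : Fin (l + 1) → ℝ} (hx : x 0 ≠ 0) (y : ℝ) :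
    HasSum (fun m : ℕ => xiFlag (genPerm (k + m) k) l x * y ^ (k + m) / (k + m).factorial)
      (∑ r ∈ Finset.range k, ∑' m, ∑' n,
        flagTerm k r (x 0) (∑ i : Fin l, x i.succ + 1) (x 0 * y) m n) := by
  have hall := hasSum_sum fun r (hr : r ∈ Finset.range k) =>
    hasSum_tsum_flagTerm (Finset.mem_range.1 hr) (x 0) (∑ i : Fin l, x i.succ + 1) (x 0 * y)
  have hlow : ∑ n ∈ Finset.range k, ∑ r ∈ Finset.range k, ∑' m,
      flagTerm k r (x 0) (∑ i : Fin l, x i.succ + 1) (x 0 * y) m n = 0 :=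
    Finset.sum_eq_zero fun n hn => Finset.sum_eq_zero fun r _ => by
      simp only [flagTerm_eq_zero ((Finset.mem_range.1 hn).trans_le (Nat.le_add_right k _)),
        tsum_zero]
  rw [← hasSum_nat_add_iff' k, hlow, sub_zero] at hall
  refine hall.congr_fun fun m => ?_
  rw [xiFlag_genPerm_mul_pow_div_factorial hk (Nat.le_add_right k m) hx, Nat.add_comm m k]

end GeneratingFunction

/-- the exponential generating function of the exponential
ℓ-flag polynomials of the general permutahedra Π_{n−1}(k−1), n ≥ k, converges
absolutely for all y, and for y ≠ 0 equals
(1/S)·∑_{i=0}^{k−1} [(x₁y)^i(e^{x₁y}−E_{k−i−1}(x₁y))/(i!(e^{x₁y}−1)^{i+1})]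
·[e^{(S/x₁)(e^{x₁y}−1)} − E_i((S/x₁)(e^{x₁y}−1))].
(Here ℓ = l+1 ≥ 1 and x₁ = x 0.) -/
theorem exp_flag_genFun_genPerm (k : ℕ) (hk : 2 ≤ k) (l : ℕ)
    (x : Fin (l + 1) → ℝ) (hx : x 0 ≠ 0) (S : ℝ)
    (hS : S = (∑ i ∈ Finset.univ.filter (fun i : Fin (l + 1) => i ≠ 0), x i) + 1)
    (hS0 : S ≠ 0) :
    (∀ y : ℝ, Summable fun m : ℕ =>
      |xiFlag (genPerm (k + m) k) l x * y ^ (k + m) / Nat.factorial (k + m)|) ∧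
    ∀ y : ℝ, y ≠ 0 →
      ∑' m : ℕ, xiFlag (genPerm (k + m) k) l x * y ^ (k + m) / Nat.factorial (k + m)
        = (1 / S) * ∑ i ∈ Finset.range k,
            ((x 0 * y) ^ i * (Real.exp (x 0 * y) - Etaylor (k - i - 1) (x 0 * y)) /
                (Nat.factorial i * (Real.exp (x 0 * y) - 1) ^ (i + 1))) *
              (Real.exp (S / x 0 * (Real.exp (x 0 * y) - 1)) -
                Etaylor i (S / x 0 * (Real.exp (x 0 * y) - 1))) := by
  have hS' : S = ∑ i : Fin l, x i.succ + 1 := by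
    rw [hS, Finset.sum_filter, Fin.sum_univ_succ]
    simp
  have hsum := hasSum_xiFlag_genPerm hk hx
  rw [← hS'] at hsum
  refine ⟨fun y => (hsum y).summable.abs, fun y hy => ?_⟩
  rw [(hsum y).tsum_eq, Finset.mul_sum]
  exact Finset.sum_congr rfl fun r hr =>
    tsum_tsum_flagTerm (Finset.mem_range.1 hr) hx hS0 (mul_ne_zero hx hy)
end

section
/- For all real numbers x and y, the series ∑_{m=0}^{∞} (∑_{h=0}^{m} (h+1)·S(m, h+1)·x^h)·y^m/m! converges absolutely and equals (e^y − 1)·e^{x(e^y − 1)}. -/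
open Pointwise

/-! Counting maps from an `m`-element set to an `n`-element set by the size of their image gives
`n ^ m = ∑ k ≤ n, k! * n.choose k * S(m, k)`. On exponential generating functions this reads
`exp y ^ n = ∑ k ≤ n, n.choose k * G k`, where `G k` is the generating function of `k! * S(·, k)`,
while the binomial theorem for `exp y = (exp y - 1) + 1` gives the same expansion with
`(exp y - 1) ^ k` in place of `G k`. Hence `G k = (exp y - 1) ^ k` by strong induction on `k`, and
the theorem follows by exchanging the order of summation over `m` and `h`. The exchange is
legitimate because the double series at `x, y` is dominated by the convergent series of nonnegative
terms at `‖x‖, ‖y‖`. -/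

open Finset NormedSpace

section Interchange

variable {β γ E : Type*} [NormedAddCommGroup E]

theorem summable_norm_of_hasSum_fiberwise {f : β × γ → E} {g : β → E}
    (hf : Summable fun p => ‖f p‖) (hg : ∀ b, HasSum (fun c => f (b, c)) (g b)) :
    Summable fun b => ‖g b‖ := by
  refine .of_nonneg_of_le (fun b => norm_nonneg _) (fun b => ?_) hf.prod
  rw [← (hg b).tsum_eq]
  exact norm_tsum_le_tsum_norm (hf.prod_factor b)

theorem hasSum_columns_of_hasSum_rows [CompleteSpace E] {f : β × γ → E} {r : β → E} {s : γ → E}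
    {a : E} (hf : Summable fun p => ‖f p‖) (hr : ∀ b, HasSum (fun c => f (b, c)) (r b))
    (hs : ∀ c, HasSum (fun b => f (b, c)) (s c)) (ha : HasSum r a) : HasSum s a := by
  have hfa : HasSum f a := by
    have hsum := hf.of_norm.hasSum
    rwa [(hsum.prod_fiberwise hr).unique ha] at hsum
  have hswap : HasSum (fun p : γ × β => f p.swap) a := (Equiv.prodComm γ β).hasSum_iff.2 hfa
  exact hswap.prod_fiberwise hs

end Interchange

theorem norm_pow_mul_le {R : Type*} [SeminormedRing R] (a b : R) (n : ℕ) :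
    ‖a ^ n * b‖ ≤ ‖a‖ ^ n * ‖b‖ := by
  induction n with
  | zero => simp
  | succ n ih =>
    calc ‖a ^ (n + 1) * b‖ = ‖a * (a ^ n * b)‖ := by rw [pow_succ', mul_assoc]
      _ ≤ ‖a‖ * ‖a ^ n * b‖ := norm_mul_le _ _
      _ ≤ ‖a‖ * (‖a‖ ^ n * ‖b‖) := by gcongr
      _ = ‖a‖ ^ (n + 1) * ‖b‖ := by rw [pow_succ', mul_assoc]

theorem stirling2_eq_stirlingSecond (n k : ℕ) : stirling2 n k = n.stirlingSecond k := by
  induction n generalizing k with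
  | zero => cases k <;> rfl
  | succ n ih =>
    cases k with
    | zero => rfl
    | succ k => rw [stirling2, Nat.stirlingSecond_succ_succ, ih, ih]

theorem sum_descFactorial_mul_stirlingSecond (n m : ℕ) :
    ∑ k ∈ range (n + 1), n.descFactorial k * m.stirlingSecond k = n ^ m := by
  induction m with
  | zero => simp [sum_range_succ']
  | succ m ih =>
    calc ∑ k ∈ range (n + 1), n.descFactorial k * (m + 1).stirlingSecond k
        = ∑ k ∈ range n, (k + 1) * (n.descFactorial (k + 1) * m.stirlingSecond (k + 1)) +
            ∑ k ∈ range n, n.descFactorial (k + 1) * m.stirlingSecond k := by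
          rw [sum_range_succ', Nat.stirlingSecond_succ_zero, mul_zero, add_zero,
            ← sum_add_distrib]
          refine sum_congr rfl fun k _ => ?_
          rw [Nat.stirlingSecond_succ_succ]
          ring
      _ = ∑ k ∈ range (n + 1), k * (n.descFactorial k * m.stirlingSecond k) +
            ∑ k ∈ range (n + 1), (n - k) * (n.descFactorial k * m.stirlingSecond k) := by
          rw [sum_range_succ', zero_mul, add_zero, sum_range_succ _ n, Nat.sub_self, zero_mul,
            add_zero]
          simp only [Nat.descFactorial_succ, mul_assoc]
      _ = ∑ k ∈ range (n + 1), n * (n.descFactorial k * m.stirlingSecond k) := by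
          rw [← sum_add_distrib]
          refine sum_congr rfl fun k hk => ?_
          rw [← add_mul, Nat.add_sub_cancel' (mem_range_succ_iff.1 hk)]
      _ = n ^ (m + 1) := by rw [← mul_sum, ih, pow_succ']

theorem hasSum_of_hasSum_sum_choose_nsmul {ι E : Type*} [AddCommGroup E] [TopologicalSpace E]
    [IsTopologicalAddGroup E] {f : ℕ → ι → E} {a : ℕ → E}
    (hf : ∀ n, HasSum (fun i => ∑ k ∈ range (n + 1), n.choose k • f k i)
      (∑ k ∈ range (n + 1), n.choose k • a k)) (n : ℕ) : HasSum (f n) (a n) := by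
  induction n using Nat.strong_induction_on with
  | _ n ih =>
    have hlower : HasSum (fun i => ∑ k ∈ range n, n.choose k • f k i)
        (∑ k ∈ range n, n.choose k • a k) :=
      hasSum_sum fun k hk => (ih k (mem_range.1 hk)).const_smul (n.choose k)
    simpa [sum_range_succ] using (hf n).sub hlower

section BanachAlgebra

variable {𝔸 : Type*} [NormedRing 𝔸] [NormedAlgebra ℚ 𝔸]

theorem hasSum_sum_choose_nsmul_stirlingSecond [CompleteSpace 𝔸] (n : ℕ) (y : 𝔸) :
    HasSum (fun m : ℕ => ∑ k ∈ range (n + 1), n.choose k •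
        (k.factorial * m.stirlingSecond k / m.factorial : ℚ) • y ^ m)
      (exp y ^ n) := by
  have hcoeff (m : ℕ) : ∑ k ∈ range (n + 1), n.choose k •
      (k.factorial * m.stirlingSecond k / m.factorial : ℚ) = (m.factorial : ℚ)⁻¹ * n ^ m := by
    rw [← Nat.cast_pow, ← sum_descFactorial_mul_stirlingSecond, Nat.cast_sum, mul_sum]
    refine sum_congr rfl fun k _ => ?_
    rw [Nat.descFactorial_eq_factorial_mul_choose]
    push_cast
    ring
  have hterm (m : ℕ) : ∑ k ∈ range (n + 1), n.choose k •
      (k.factorial * m.stirlingSecond k / m.factorial : ℚ) • y ^ m =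
        (m.factorial : ℚ)⁻¹ • (n • y) ^ m := by
    simp_rw [← smul_assoc]
    rw [← sum_smul, hcoeff, mul_smul, smul_pow, ← Nat.cast_pow, Nat.cast_smul_eq_nsmul]
  simp only [hterm, ← exp_nsmul]
  exact exp_series_hasSum_exp' (n • y)

theorem hasSum_factorial_mul_stirlingSecond [CompleteSpace 𝔸] (k : ℕ) (y : 𝔸) :
    HasSum (fun m : ℕ => (k.factorial * m.stirlingSecond k / m.factorial : ℚ) • y ^ m)
      ((exp y - 1) ^ k) := by
  have hbinom (n : ℕ) :
      ∑ k ∈ range (n + 1), n.choose k • (exp y - 1) ^ k = exp y ^ n := by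
    calc ∑ k ∈ range (n + 1), n.choose k • (exp y - 1) ^ k = (exp y - 1 + 1) ^ n := by
          simp only [(Commute.one_right (exp y - 1)).add_pow, one_pow, mul_one, nsmul_eq_mul']
      _ = exp y ^ n := by rw [sub_add_cancel]
  have hexpand (n : ℕ) : HasSum (fun m : ℕ => ∑ k ∈ range (n + 1), n.choose k •
        (k.factorial * m.stirlingSecond k / m.factorial : ℚ) • y ^ m)
      (∑ k ∈ range (n + 1), n.choose k • (exp y - 1) ^ k) :=
    (hbinom n).symm ▸ hasSum_sum_choose_nsmul_stirlingSecond n y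
  exact hasSum_of_hasSum_sum_choose_nsmul hexpand k

/-- The term `(h + 1) S(m, h + 1) x ^ h y ^ m / m!`, at the index `(h, m)`, of the double series
obtained by expanding the bivariate generating function in powers of `x` and `y`. -/
def stirlingEGFTerm (x y : 𝔸) (p : ℕ × ℕ) : 𝔸 :=
  ((p.1 + 1) * p.2.stirlingSecond (p.1 + 1) / p.2.factorial : ℚ) • (x ^ p.1 * y ^ p.2)

theorem hasSum_stirlingEGFTerm_left (x y : 𝔸) (m : ℕ) :
    HasSum (fun h => stirlingEGFTerm x y (h, m))
      ((m.factorial : ℚ)⁻¹ •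
        ((∑ h ∈ range (m + 1), ((h + 1) * m.stirlingSecond (h + 1) : 𝔸) * x ^ h) * y ^ m)) := by
  have hzero (h : ℕ) (hh : h ∉ range (m + 1)) : stirlingEGFTerm x y (h, m) = 0 := by
    have hlt : m < h + 1 := by grind
    simp [stirlingEGFTerm, Nat.stirlingSecond_eq_zero_of_lt hlt]
  have hsum : ∑ h ∈ range (m + 1), stirlingEGFTerm x y (h, m) = (m.factorial : ℚ)⁻¹ •
      ((∑ h ∈ range (m + 1), ((h + 1) * m.stirlingSecond (h + 1) : 𝔸) * x ^ h) * y ^ m) := by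
    rw [sum_mul, smul_sum]
    refine sum_congr rfl fun h _ => ?_
    have hcoeff : ((h + 1) * m.stirlingSecond (h + 1) : 𝔸) * x ^ h =
        ((h + 1) * m.stirlingSecond (h + 1) : ℚ) • x ^ h := by
      simp [Algebra.smul_def]
    rw [stirlingEGFTerm, hcoeff, smul_mul_assoc, smul_smul, div_eq_inv_mul]
  exact hsum ▸ hasSum_sum_of_ne_finset_zero hzero

theorem norm_stirlingEGFTerm_le (x y : 𝔸) (p : ℕ × ℕ) :
    ‖stirlingEGFTerm x y p‖ ≤ stirlingEGFTerm ‖x‖ ‖y‖ p * ‖(1 : 𝔸)‖ := by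
  obtain ⟨h, m⟩ := p
  have hpow : ‖x ^ h * y ^ m‖ ≤ ‖x‖ ^ h * (‖y‖ ^ m * ‖(1 : 𝔸)‖) := by
    refine (norm_pow_mul_le x _ h).trans ?_
    gcongr
    simpa using norm_pow_mul_le y 1 m
  set c : ℚ := (h + 1) * m.stirlingSecond (h + 1) / m.factorial
  have hc : ‖c‖ = c := by
    rw [← Rat.norm_cast_real, Real.norm_of_nonneg (by positivity)]
  calc ‖c • (x ^ h * y ^ m)‖ = c * ‖x ^ h * y ^ m‖ := by rw [norm_smul, hc]
    _ ≤ c * (‖x‖ ^ h * (‖y‖ ^ m * ‖(1 : 𝔸)‖)) := by gcongr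
    _ = c • (‖x‖ ^ h * ‖y‖ ^ m) * ‖(1 : 𝔸)‖ := by rw [Rat.smul_def]; ring

theorem hasSum_stirlingEGFTerm_right [CompleteSpace 𝔸] (x y : 𝔸) (h : ℕ) :
    HasSum (fun m => stirlingEGFTerm x y (h, m))
      ((h.factorial : ℚ)⁻¹ • (x ^ h * (exp y - 1) ^ (h + 1))) := by
  have hterm (m : ℕ) : stirlingEGFTerm x y (h, m) = (h.factorial : ℚ)⁻¹ • (x ^ h *
      ((h + 1).factorial * m.stirlingSecond (h + 1) / m.factorial : ℚ) • y ^ m) := by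
    rw [stirlingEGFTerm, mul_smul_comm, smul_smul, Nat.factorial_succ]
    congr 1
    push_cast
    field_simp
  simp only [hterm]
  exact ((hasSum_factorial_mul_stirlingSecond (h + 1) y).mul_left (x ^ h)).const_smul _

theorem hasSum_inv_factorial_smul_pow_mul_pow_succ [CompleteSpace 𝔸] {x z : 𝔸}
    (hxz : Commute x z) :
    HasSum (fun h : ℕ => (h.factorial : ℚ)⁻¹ • (x ^ h * z ^ (h + 1))) (z * exp (x * z)) := by
  have hterm (h : ℕ) : (h.factorial : ℚ)⁻¹ • (x ^ h * z ^ (h + 1)) =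
      z * ((h.factorial : ℚ)⁻¹ • (x * z) ^ h) := by
    rw [mul_smul_comm, hxz.mul_pow, pow_succ', ← mul_assoc, ← mul_assoc, (hxz.pow_left h).eq]
  simp only [hterm]
  exact (exp_series_hasSum_exp' (x * z)).mul_left z

theorem summable_norm_stirlingEGFTerm (x y : 𝔸) : Summable fun p => ‖stirlingEGFTerm x y p‖ := by
  have hnonneg : 0 ≤ stirlingEGFTerm ‖x‖ ‖y‖ := fun p => by
    simp only [stirlingEGFTerm, Rat.smul_def]
    positivity
  have hsummable : Summable (stirlingEGFTerm ‖x‖ ‖y‖) := by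
    refine (summable_prod_of_nonneg hnonneg).2
      ⟨fun h => (hasSum_stirlingEGFTerm_right ‖x‖ ‖y‖ h).summable, ?_⟩
    simp only [(hasSum_stirlingEGFTerm_right ‖x‖ ‖y‖ _).tsum_eq]
    exact (hasSum_inv_factorial_smul_pow_mul_pow_succ (Commute.all ‖x‖ (exp ‖y‖ - 1))).summable
  exact .of_nonneg_of_le (fun p => norm_nonneg _) (norm_stirlingEGFTerm_le x y)
    (hsummable.mul_right _)

theorem stirling_egf_identity_general [CompleteSpace 𝔸] {x y : 𝔸} (hxy : Commute x y) :
    (Summable fun m : ℕ => ‖(m.factorial : ℚ)⁻¹ •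
      ((∑ h ∈ range (m + 1), ((h + 1) * stirling2 m (h + 1) : 𝔸) * x ^ h) * y ^ m)‖) ∧
    HasSum (fun m : ℕ => (m.factorial : ℚ)⁻¹ •
        ((∑ h ∈ range (m + 1), ((h + 1) * stirling2 m (h + 1) : 𝔸) * x ^ h) * y ^ m))
      ((exp y - 1) * exp (x * (exp y - 1))) := by
  simp only [stirling2_eq_stirlingSecond]
  have hcomm : Commute x (exp y - 1) := hxy.exp_right.sub_right (.one_right x)
  have hsummable := summable_norm_stirlingEGFTerm x y
  exact ⟨summable_norm_of_hasSum_fiberwise hsummable.prod_symm (hasSum_stirlingEGFTerm_left x y),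
    hasSum_columns_of_hasSum_rows hsummable (hasSum_stirlingEGFTerm_right x y)
      (hasSum_stirlingEGFTerm_left x y)
      (hasSum_inv_factorial_smul_pow_mul_pow_succ hcomm)⟩

end BanachAlgebra

/-- ∑_{m≥0} (∑_{h=0}^m (h+1)·S(m,h+1)·x^h)·y^m/m! converges
absolutely and equals (e^y − 1)·e^{x(e^y−1)}. -/
theorem stirling_egf_identity (x y : ℝ) :
    (Summable fun m : ℕ =>
      |(∑ h ∈ Finset.range (m + 1), ((h + 1) * stirling2 m (h + 1) : ℝ) * x ^ h)
        * y ^ m / Nat.factorial m|) ∧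
    ∑' m : ℕ, (∑ h ∈ Finset.range (m + 1), ((h + 1) * stirling2 m (h + 1) : ℝ) * x ^ h)
        * y ^ m / Nat.factorial m
      = (Real.exp y - 1) * Real.exp (x * (Real.exp y - 1)) := by
  have h := stirling_egf_identity_general (Commute.all x y)
  simp only [Rat.smul_def, Rat.cast_inv, Rat.cast_natCast, inv_mul_eq_div, Real.norm_eq_abs,
    ← Real.exp_eq_exp_ℝ] at h
  exact ⟨h.1, h.2.tsum_eq⟩
end
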